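/- Suppose 2 < p < ∞, 0 < s < 1 with 1 − 2/p < s, let p' be the conjugate exponent of p, and let g be holomorphic on the unit disc D. Then the Volterra operator T_g maps the Besov space B^p into Q_s if and only if g ∈ Q_{s,log,1/p'}. -/

import Mathlib

open MeasureTheory Metric Complex Real Filter Set

noncomputable section

/-- `f` is holomorphic on the open unit disc. -/
def HolOn (f : ℂ → ℂ) : Prop := DifferentiableOn ℂ f (Metric.ball (0:ℂ) 1)

/-- The normalized Lebesgue area measure on `ℂ` (so the unit disc has total mass 1). -/
def dA : Measure ℂ := (ENNReal.ofReal π)⁻¹ • volume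

/-- Bounded holomorphic functions on the unit disc. -/
def Hinf : Set (ℂ → ℂ) :=
  {f | HolOn f ∧ ∃ C : ℝ, ∀ z ∈ Metric.ball (0:ℂ) 1, ‖f z‖ ≤ C}

/-- The Bloch space. -/
def Bloch : Set (ℂ → ℂ) :=
  {f | HolOn f ∧ ∃ C : ℝ, ∀ z ∈ Metric.ball (0:ℂ) 1,
      (1 - ‖z‖ ^ 2) * ‖deriv f z‖ ≤ C}

/-- The little Bloch space: `(1-|z|²)|f'(z)| → 0` as `|z| → 1⁻`. -/
def littleBloch : Set (ℂ → ℂ) :=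
  {f | HolOn f ∧ ∀ ε : ℝ, 0 < ε → ∃ r : ℝ, r < 1 ∧ ∀ z ∈ Metric.ball (0:ℂ) 1,
      r < ‖z‖ → (1 - ‖z‖ ^ 2) * ‖deriv f z‖ < ε}

/-- The `α`-logarithmic Bloch space. -/
def BlochLog (α : ℝ) : Set (ℂ → ℂ) :=
  {f | HolOn f ∧ ∃ C : ℝ, ∀ z ∈ Metric.ball (0:ℂ) 1,
      (1 - ‖z‖ ^ 2) * (Real.log (2 / (1 - ‖z‖ ^ 2))) ^ α *
        ‖deriv f z‖ ≤ C}

/-- The Besov space `B¹`: holomorphic `f` with `∫_D |f''| dA < ∞`. -/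
def Besov1 : Set (ℂ → ℂ) :=
  {f | HolOn f ∧ ∫⁻ z in Metric.ball (0:ℂ) 1,
      ENNReal.ofReal (‖deriv (deriv f) z‖) ∂dA < ⊤}

/-- The Besov space `Bᵖ` (`1 < p < ∞`): `∫_D (1-|z|)^(p-2) |f'(z)|^p dA(z) < ∞`. -/
def Besov (p : ℝ) : Set (ℂ → ℂ) :=
  {f | HolOn f ∧ ∫⁻ z in Metric.ball (0:ℂ) 1,
      ENNReal.ofReal ((1 - ‖z‖) ^ (p - 2) * ‖deriv f z‖ ^ p) ∂dA < ⊤}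

open scoped Classical in
/-- The Besov space `Bᵖ` for all `1 ≤ p < ∞` (with the special definition at `p = 1`). -/
def BesovFull (p : ℝ) : Set (ℂ → ℂ) := if p = 1 then Besov1 else Besov p

/-- The Möbius transformation `φ_a(z) = (a-z)/(1 - conj a · z)`. -/
def phi (a z : ℂ) : ℂ := (a - z) / (1 - (starRingEnd ℂ) a * z)

/-- The space `Q_s`. -/
def Qs (s : ℝ) : Set (ℂ → ℂ) :=
  {f | HolOn f ∧ ⨆ a ∈ Metric.ball (0:ℂ) 1, ∫⁻ z in Metric.ball (0:ℂ) 1,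
      ENNReal.ofReal (‖deriv f z‖ ^ 2 *
        (1 - ‖phi a z‖ ^ 2) ^ s) ∂dA < ⊤}

/-- The space `Q_{s,log,α}`. -/
def QsLog (s α : ℝ) : Set (ℂ → ℂ) :=
  {f | HolOn f ∧ ⨆ a ∈ Metric.ball (0:ℂ) 1,
      (ENNReal.ofReal ((Real.log (2 / (1 - ‖a‖))) ^ (2 * α)) *
        ∫⁻ z in Metric.ball (0:ℂ) 1,
          ENNReal.ofReal (‖deriv f z‖ ^ 2 *
            (1 - ‖phi a z‖ ^ 2) ^ s) ∂dA) < ⊤}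

/-- The Volterra operator `T_g(f)(z) = ∫_0^z g'(ξ) f(ξ) dξ` (along the segment from 0 to z). -/
def Tg (g f : ℂ → ℂ) : ℂ → ℂ :=
  fun z => z * ∫ t in (0:ℝ)..1, deriv g ((t : ℂ) * z) * f ((t : ℂ) * z)

/-- The companion operator `I_g(f)(z) = ∫_0^z g(ξ) f'(ξ) dξ` (along the segment from 0 to z). -/
def Ig (g f : ℂ → ℂ) : ℂ → ℂ :=
  fun z => z * ∫ t in (0:ℝ)..1, g ((t : ℂ) * z) * deriv f ((t : ℂ) * z)

/-- The multiplication operator `M_g(f) = g · f`. -/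
def Mg (g f : ℂ → ℂ) : ℂ → ℂ := fun z => g z * f z

/-- `T` maps `X` into `Y`. -/
def MapsInto (T : (ℂ → ℂ) → (ℂ → ℂ)) (X Y : Set (ℂ → ℂ)) : Prop :=
  ∀ f ∈ X, T f ∈ Y

/-- The Hardy space `H^q`. -/
def Hardy (q : ℝ) : Set (ℂ → ℂ) :=
  {f | HolOn f ∧ ∃ C : ℝ, ∀ r : ℝ, 0 < r → r < 1 →
      (1 / (2 * π)) * ∫ t in (0:ℝ)..(2 * π),
        ‖f ((r : ℂ) * Complex.exp ((t : ℂ) * Complex.I))‖ ^ q ≤ C}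

/-- An inner function: bounded holomorphic with radial boundary values of modulus 1 a.e. -/
def IsInner (g : ℂ → ℂ) : Prop :=
  g ∈ Hinf ∧ ∀ᵐ t : ℝ ∂(volume.restrict (Set.Ioc (0:ℝ) (2 * π))),
    Filter.Tendsto (fun r : ℝ => ‖g ((r : ℂ) * Complex.exp ((t : ℂ) * Complex.I))‖)
      (nhdsWithin 1 (Set.Iio 1)) (nhds 1)

/-- `X` has the f-property (division by inner functions). -/
def FProperty (X : Set (ℂ → ℂ)) : Prop :=
  ∀ h ∈ X, ∀ g : ℂ → ℂ, IsInner g →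
    (fun z => h z / g z) ∈ Hardy 1 → (fun z => h z / g z) ∈ X

/-- The space of multipliers `M(X,Y)`. -/
def Mult (X Y : Set (ℂ → ℂ)) : Set (ℂ → ℂ) :=
  {g | HolOn g ∧ ∀ f ∈ X, (fun z => g z * f z) ∈ Y}

end

open scoped ENNReal ComplexConjugate

/-!
One integral estimate drives the proof. Integrating `f'` along the radius to `z` and replacing point
values by means over Whitney discs, with Hölder's inequality against a weight depending on
`t |z|`, bounds `|f z - f 0| ^ q` by an area integral of `|f'| ^ q` against a kernel. For
`f ∈ B^p` and `a ∈ D` this gives `|f a - f 0| ≤ C log (2 / (1 - |a|)) ^ (1 / p')`; for `q = 2` it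
gives a Carleson embedding for `|g'|² (1 - |z|²) ^ s dA` when `g` satisfies the logarithmic
condition with an exponent `2 / p' > 1`.

Sufficiency: the energy of `T_g f` at `a` is the integral of `|f|²` against
`|g'|² (1 - |φ_a|²) ^ s dA`. The contribution of the value `f a` is absorbed by the logarithm. The
oscillation `f - f a`, multiplied by `(1 - ā z) ^ (-s)`, has a weighted Dirichlet integral of order
`(1 - |a|²) ^ (-s)` because `1 - 2 / p < s`, so the Carleson embedding bounds its contribution.

Necessity: the functions `log (2 / (1 - ā z))`, divided by `log (2 / (1 - |a|)) ^ (1 / p)`, are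
bounded in `B^p` and have size `log (2 / (1 - |a|)) ^ (1 / p')` near `a`. As their real parts are
nonnegative they can be superposed without cancellation, and a gliding hump replaces the closed
graph theorem.
-/

/-! ### Sub-mean value property -/

section SubMean

variable {E : Type*} [NormedAddCommGroup E] [NormedSpace ℂ E]

lemma lintegral_eq_lintegral_circleMap {f : ℂ → ℝ≥0∞} (hf : Measurable f) (c : ℂ) :
    ∫⁻ z, f z = ∫⁻ r in Ioi (0 : ℝ), ENNReal.ofReal r *
      ∫⁻ θ in Ioo (-π) π, f (circleMap c r θ) := by
  have hpolar (x : ℝ × ℝ) : c + Complex.polarCoord.symm x = circleMap c x.1 x.2 := by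
    rw [Complex.polarCoord_symm_apply, circleMap, Complex.exp_mul_I, ← Complex.ofReal_cos,
      ← Complex.ofReal_sin]
  rw [← lintegral_add_left_eq_self f c, ← Complex.lintegral_comp_polarCoord_symm]
  simp only [hpolar, smul_eq_mul]
  rw [show polarCoord.target = Ioi (0 : ℝ) ×ˢ Ioo (-π) π from rfl, Measure.volume_eq_prod,
    ← Measure.prod_restrict, lintegral_prod _ (by fun_prop)]
  simp only [lintegral_const_mul' _ _ ENNReal.ofReal_ne_top]

lemma lintegral_ofReal_circleMap {f : ℂ → ℝ} {c : ℂ} {r : ℝ} (hf : CircleIntegrable f c r)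
    (hf₀ : ∀ z, 0 ≤ f z) :
    ∫⁻ θ in Ioo (-π) π, ENNReal.ofReal (f (circleMap c r θ)) =
      ENNReal.ofReal (2 * π * circleAverage f c r) := by
  have hperiodic : Function.Periodic (fun θ => f (circleMap c r θ)) (2 * π) :=
    (periodic_circleMap c r).comp f
  have hπ : -π ≤ -π + 2 * π := by linarith [pi_pos]
  have hint := hperiodic.intervalIntegrable two_pi_pos.ne'
    (t := 0) (by simpa [CircleIntegrable] using hf) (-π) (-π + 2 * π)
  rw [circleAverage, smul_eq_mul, mul_inv_cancel_left₀ two_pi_pos.ne', ← zero_add (2 * π),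
    hperiodic.intervalIntegral_add_eq 0 (-π), intervalIntegral.integral_of_le hπ,
    ofReal_integral_eq_lintegral_ofReal hint.1 (ae_of_all _ fun θ => hf₀ _),
    show -π + 2 * π = π by ring, restrict_Ioo_eq_restrict_Ioc]

variable [CompleteSpace E]

lemma norm_rpow_le_circleAverage {H : ℂ → E} {c : ℂ} {R r q : ℝ}
    (hH : DifferentiableOn ℂ H (ball c R)) (hr : 0 < r) (hrR : r < R) (hq : 1 ≤ q) :
    ‖H c‖ ^ q ≤ circleAverage (fun z => ‖H z‖ ^ q) c r := by
  have hball : closedBall c r ⊆ ball c R := closedBall_subset_ball hrR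
  have hH_circle : Continuous fun θ => H (circleMap c r θ) :=
    continuousOn_univ.1 <| hH.continuousOn.comp (continuous_circleMap c r).continuousOn
      fun θ _ => hball (circleMap_mem_closedBall c hr.le θ)
  have hmean : circleAverage H c r = H c := by
    refine DiffContOnCl.circleAverage (hH.mono ?_).diffContOnCl
    rwa [abs_of_pos hr, closure_ball c hr.ne']
  have hint {f : ℝ → ℝ} (hf : Continuous f) : IntegrableOn f (Ioc 0 (2 * π)) :=
    hf.integrableOn_Icc.mono_set Ioc_subset_Icc_self
  have hrpow : Continuous fun x : ℝ => x ^ q := continuous_id.rpow_const fun _ => .inr (by linarith)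
  calc ‖H c‖ ^ q
      ≤ (⨍ θ in Ioc 0 (2 * π), ‖H (circleMap c r θ)‖) ^ q := by
        refine Real.rpow_le_rpow (norm_nonneg _) ?_ (by linarith)
        rw [← hmean, circleAverage_eq_intervalAverage, uIoc_of_le two_pi_pos.le, setAverage_eq,
          setAverage_eq, norm_smul, Real.norm_of_nonneg (by positivity), smul_eq_mul]
        gcongr
        exact norm_integral_le_integral_norm _
    _ ≤ ⨍ θ in Ioc 0 (2 * π), ‖H (circleMap c r θ)‖ ^ q :=
        (convexOn_rpow hq).map_set_average_le hrpow.continuousOn isClosed_Ici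
          (by simp [pi_pos]) measure_Ioc_lt_top.ne (ae_of_all _ fun θ => norm_nonneg _)
          (hint hH_circle.norm) (hint (hrpow.comp hH_circle.norm))
    _ = circleAverage (fun z => ‖H z‖ ^ q) c r := by
        rw [circleAverage_eq_intervalAverage, uIoc_of_le two_pi_pos.le]

lemma ofReal_area_mul_norm_rpow_le_lintegral {H : ℂ → E} {c : ℂ} {R q : ℝ}
    (hH : DifferentiableOn ℂ H (ball c R)) (hR : 0 ≤ R) (hq : 1 ≤ q) :
    ENNReal.ofReal (π * R ^ 2 * ‖H c‖ ^ q) ≤ ∫⁻ u in ball c R, ENNReal.ofReal (‖H u‖ ^ q) := by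
  have hmeas : Measurable ((ball c R).indicator fun u => ENNReal.ofReal (‖H u‖ ^ q)) := by
    classical
    rw [← piecewise_eq_indicator]
    refine ContinuousOn.measurable_piecewise ?_ continuousOn_const measurableSet_ball
    exact ENNReal.continuous_ofReal.comp_continuousOn
      (hH.continuousOn.norm.rpow_const fun _ _ => .inr (by linarith))
  have hradius : ∫⁻ r in Ioo 0 R, ENNReal.ofReal r = ENNReal.ofReal (R ^ 2 / 2) := by
    have hint : IntegrableOn (fun r : ℝ => r) (Ioc 0 R) :=
      continuous_id.integrableOn_Icc.mono_set Ioc_subset_Icc_self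
    rw [restrict_Ioo_eq_restrict_Ioc, ← ofReal_integral_eq_lintegral_ofReal hint
      (ae_restrict_of_forall_mem measurableSet_Ioc fun r hr => hr.1.le),
      ← intervalIntegral.integral_of_le hR, integral_id]
    simp
  rw [← lintegral_indicator measurableSet_ball, lintegral_eq_lintegral_circleMap hmeas c]
  calc ENNReal.ofReal (π * R ^ 2 * ‖H c‖ ^ q)
      = ∫⁻ r in Ioo 0 R, ENNReal.ofReal r * ENNReal.ofReal (2 * π * ‖H c‖ ^ q) := by
        rw [lintegral_mul_const _ (by fun_prop), hradius, ← ENNReal.ofReal_mul (by positivity)]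
        congr 1
        ring
    _ ≤ ∫⁻ r in Ioo 0 R, ENNReal.ofReal r * ∫⁻ θ in Ioo (-π) π,
          (ball c R).indicator (fun u => ENNReal.ofReal (‖H u‖ ^ q)) (circleMap c r θ) := by
        refine setLIntegral_mono' measurableSet_Ioo fun r hr => ?_
        have hball (θ : ℝ) : circleMap c r θ ∈ ball c R :=
          closedBall_subset_ball hr.2 (circleMap_mem_closedBall c hr.1.le θ)
        have hsphere : sphere c r ⊆ ball c R :=
          sphere_subset_closedBall.trans (closedBall_subset_ball hr.2)
        have hint : CircleIntegrable (fun u => ‖H u‖ ^ q) c r :=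
          ((hH.continuousOn.mono hsphere).norm.rpow_const
            fun _ _ => .inr (by linarith)).circleIntegrable hr.1.le
        simp only [indicator_of_mem (hball _)]
        rw [lintegral_ofReal_circleMap hint fun z => by positivity]
        gcongr
        exact norm_rpow_le_circleAverage hH hr.1 hr.2 hq
    _ ≤ _ := lintegral_mono_set Ioo_subset_Ioi_self

end SubMean

/-! ### Estimates along radii and Whitney discs -/

section WeightedHolder

variable {α : Type*} [MeasurableSpace α] {μ : Measure α}

lemma lintegral_rpow_le_lintegral_rpow_mul_lintegral_inv {f v : α → ℝ≥0∞} {q : ℝ} (hq : 1 < q)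
    (hf : AEMeasurable f μ) (hv : AEMeasurable v μ) (hv_zero : ∀ᵐ x ∂μ, v x ≠ 0)
    (hv_top : ∀ᵐ x ∂μ, v x ≠ ∞) :
    (∫⁻ x, f x ∂μ) ^ q ≤ (∫⁻ x, f x ^ q * v x ^ (q - 1) ∂μ) * (∫⁻ x, (v x)⁻¹ ∂μ) ^ (q - 1) := by
  have hq₀ : 0 < q := by linarith
  have hq₁ : 0 < q - 1 := by linarith
  have hfactor : ∫⁻ x, f x ∂μ =
      ∫⁻ x, f x * v x ^ ((q - 1) / q) * v x ^ (-((q - 1) / q)) ∂μ := by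
    refine lintegral_congr_ae ?_
    filter_upwards [hv_zero, hv_top] with x h₀ h₁
    rw [mul_assoc, ← ENNReal.rpow_add _ _ h₀ h₁, add_neg_cancel, ENNReal.rpow_zero, mul_one]
  have hleft (x : α) : (f x * v x ^ ((q - 1) / q)) ^ q = f x ^ q * v x ^ (q - 1) := by
    rw [ENNReal.mul_rpow_of_nonneg _ _ hq₀.le, ← ENNReal.rpow_mul, div_mul_cancel₀ _ hq₀.ne']
  have hright (x : α) : (v x ^ (-((q - 1) / q))) ^ (q / (q - 1)) = (v x)⁻¹ := by
    rw [← ENNReal.rpow_mul, ← ENNReal.rpow_neg_one]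
    congr 1
    field_simp
  have hholder := ENNReal.lintegral_mul_le_Lp_mul_Lq μ (Real.HolderConjugate.conjExponent hq)
    (hf.mul (hv.pow_const ((q - 1) / q))) (hv.pow_const (-((q - 1) / q)))
  simp only [Pi.mul_apply, Real.conjExponent, hleft, hright, ← hfactor] at hholder
  refine (ENNReal.rpow_le_rpow hholder hq₀.le).trans_eq ?_
  rw [ENNReal.mul_rpow_of_nonneg _ _ hq₀.le, ← ENNReal.rpow_mul, ← ENNReal.rpow_mul,
    one_div_mul_cancel hq₀.ne', ENNReal.rpow_one, one_div_div, div_mul_cancel₀ _ hq₀.ne']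

end WeightedHolder

lemma lintegral_ofReal_deriv_eq_sub {P P' : ℝ → ℝ} {a b : ℝ} (hab : a ≤ b)
    (hP : ∀ t ∈ Icc a b, HasDerivAt P (P' t) t) (hP' : ∀ t ∈ Icc a b, 0 ≤ P' t) :
    ∫⁻ t in Ioo a b, ENNReal.ofReal (P' t) = ENNReal.ofReal (P b - P a) := by
  have hint : IntervalIntegrable P' volume a b := by
    refine intervalIntegral.intervalIntegrable_deriv_of_nonneg (g := P) ?_ ?_ ?_
    all_goals simp only [uIcc_of_le hab, min_eq_left hab, max_eq_right hab]
    · exact HasDerivAt.continuousOn hP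
    · exact fun t ht => hP t (Ioo_subset_Icc_self ht)
    · exact fun t ht => hP' t (Ioo_subset_Icc_self ht)
  rw [← intervalIntegral.integral_eq_sub_of_hasDerivAt (by rwa [uIcc_of_le hab]) hint,
    intervalIntegral.integral_of_le hab, restrict_Ioo_eq_restrict_Ioc,
    ofReal_integral_eq_lintegral_ofReal hint.1]
  exact ae_restrict_of_forall_mem measurableSet_Ioc fun t ht => hP' t (Ioc_subset_Icc_self ht)

lemma lintegral_ofReal_deriv_mul_eq_sub {P P' : ℝ → ℝ} {ρ : ℝ} (hρ : 0 ≤ ρ)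
    (hP : ∀ r ∈ Icc 0 ρ, HasDerivAt P (P' r) r) (hP' : ∀ r ∈ Icc 0 ρ, 0 ≤ P' r) :
    ENNReal.ofReal ρ * ∫⁻ t in Ioo (0 : ℝ) 1, ENNReal.ofReal (P' (t * ρ)) =
      ENNReal.ofReal (P ρ - P 0) := by
  have hmem {t : ℝ} (ht : t ∈ Icc (0 : ℝ) 1) : t * ρ ∈ Icc 0 ρ :=
    ⟨mul_nonneg ht.1 hρ, mul_le_of_le_one_left hρ ht.2⟩
  have hderiv (t : ℝ) (ht : t ∈ Icc (0 : ℝ) 1) :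
      HasDerivAt (fun t => P (t * ρ)) (ρ * P' (t * ρ)) t := by
    simpa [mul_comm, Function.comp_def] using
      (hP _ (hmem ht)).comp t ((hasDerivAt_id t).mul_const ρ)
  have hftc := lintegral_ofReal_deriv_eq_sub zero_le_one hderiv
    fun t ht => mul_nonneg hρ (hP' _ (hmem ht))
  simp only [one_mul, zero_mul, ENNReal.ofReal_mul hρ] at hftc
  rwa [lintegral_const_mul' _ _ ENNReal.ofReal_ne_top] at hftc

section Radial

lemma HolOn.hasDerivAt {f : ℂ → ℂ} (hf : HolOn f) {z : ℂ} (hz : ‖z‖ < 1) :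
    HasDerivAt f (deriv f z) z :=
  (hf.differentiableAt (isOpen_ball.mem_nhds (mem_ball_zero_iff.2 hz))).hasDerivAt

lemma HolOn.holOn_deriv {f : ℂ → ℂ} (hf : HolOn f) : HolOn (deriv f) :=
  DifferentiableOn.deriv hf isOpen_ball

variable {z : ℂ} {t : ℝ}

lemma norm_ofReal_mul_of_nonneg (ht : 0 ≤ t) (z : ℂ) : ‖(t : ℂ) * z‖ = t * ‖z‖ := by
  rw [norm_mul, Complex.norm_real, Real.norm_of_nonneg ht]

lemma mul_norm_lt_one (hz : ‖z‖ < 1) (ht : t ∈ Icc (0 : ℝ) 1) : t * ‖z‖ < 1 :=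
  (mul_le_of_le_one_left (norm_nonneg z) ht.2).trans_lt hz

lemma norm_ofReal_mul_lt_one (hz : ‖z‖ < 1) (ht : t ∈ Icc (0 : ℝ) 1) : ‖(t : ℂ) * z‖ < 1 := by
  rw [norm_ofReal_mul_of_nonneg ht.1]
  exact mul_norm_lt_one hz ht

lemma HolOn.continuousOn_radius {f : ℂ → ℂ} (hf : HolOn f) (hz : ‖z‖ < 1) :
    ContinuousOn (fun t : ℝ => f (t * z)) (Icc 0 1) :=
  hf.continuousOn.comp (by fun_prop)
    fun _ ht => mem_ball_zero_iff.2 (norm_ofReal_mul_lt_one hz ht)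

lemma sub_eq_mul_integral_radius {F f : ℂ → ℂ} (hF : ∀ w, ‖w‖ < 1 → HasDerivAt F (f w) w)
    (hf : HolOn f) (hz : ‖z‖ < 1) :
    F z - F 0 = z * ∫ t in (0 : ℝ)..1, f (t * z) := by
  have hint : IntervalIntegrable (fun t : ℝ => z * f (t * z)) volume 0 1 := by
    apply ContinuousOn.intervalIntegrable
    rw [uIcc_of_le zero_le_one]
    exact continuousOn_const.mul (hf.continuousOn_radius hz)
  have hderiv (t : ℝ) (ht : t ∈ uIcc (0 : ℝ) 1) :
      HasDerivAt (fun t : ℝ => F (t * z)) (z * f (t * z)) t := by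
    rw [uIcc_of_le zero_le_one] at ht
    have hline : HasDerivAt (fun t : ℝ => (t : ℂ) * z) z t := by
      simpa using (Complex.ofRealCLM.hasDerivAt (x := t)).mul_const z
    exact (hF _ (norm_ofReal_mul_lt_one hz ht)).scomp t hline
  rw [← intervalIntegral.integral_const_mul,
    intervalIntegral.integral_eq_sub_of_hasDerivAt hderiv hint]
  simp

lemma HolOn.ofReal_norm_sub_le_lintegral_radius {F : ℂ → ℂ} (hF : HolOn F) (hz : ‖z‖ < 1) :
    ENNReal.ofReal ‖F z - F 0‖ ≤
      ENNReal.ofReal ‖z‖ * ∫⁻ t in Ioo (0 : ℝ) 1, ENNReal.ofReal ‖deriv F (t * z)‖ := by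
  rw [sub_eq_mul_integral_radius (fun w hw => hF.hasDerivAt hw) hF.holOn_deriv hz, norm_mul,
    ENNReal.ofReal_mul (norm_nonneg _), intervalIntegral.integral_of_le zero_le_one,
    restrict_Ioo_eq_restrict_Ioc]
  gcongr
  simp only [ofReal_norm]
  exact enorm_integral_le_lintegral_enorm _

lemma HolOn.ofReal_norm_sub_rpow_le {F : ℂ → ℂ} (hF : HolOn F) (hz : ‖z‖ < 1) {q : ℝ}
    (hq : 1 < q) {v P : ℝ → ℝ} (hv_meas : Measurable v) (hv : ∀ r ∈ Icc 0 ‖z‖, 0 < v r)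
    (hP : ∀ r ∈ Icc 0 ‖z‖, HasDerivAt P (v r)⁻¹ r) :
    ENNReal.ofReal (‖F z - F 0‖ ^ q) ≤
      (ENNReal.ofReal ‖z‖ * ∫⁻ t in Ioo (0 : ℝ) 1,
        ENNReal.ofReal (‖deriv F (t * z)‖ ^ q) * ENNReal.ofReal (v (t * ‖z‖) ^ (q - 1))) *
      ENNReal.ofReal (P ‖z‖ - P 0) ^ (q - 1) := by
  have hq₀ : 0 < q := by linarith
  have hvt {t : ℝ} (ht : t ∈ Ioo (0 : ℝ) 1) : 0 < v (t * ‖z‖) :=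
    hv _ ⟨by have := ht.1; positivity, mul_le_of_le_one_left (norm_nonneg z) ht.2.le⟩
  set μ : Measure ℝ := ENNReal.ofReal ‖z‖ • volume.restrict (Ioo (0 : ℝ) 1) with hμ
  have hμ_mem : ∀ᵐ t ∂μ, t ∈ Ioo (0 : ℝ) 1 :=
    Measure.smul_absolutelyContinuous.ae_le (ae_restrict_mem measurableSet_Ioo)
  have hinv : ∫⁻ t, (ENNReal.ofReal (v (t * ‖z‖)))⁻¹ ∂μ = ENNReal.ofReal (P ‖z‖ - P 0) := by
    rw [← lintegral_ofReal_deriv_mul_eq_sub (norm_nonneg z) hP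
      fun r hr => (inv_pos.2 (hv r hr)).le, hμ, lintegral_smul_measure, smul_eq_mul]
    congr 1
    exact setLIntegral_congr_fun measurableSet_Ioo
      fun t ht => (ENNReal.ofReal_inv_of_pos (hvt ht)).symm
  have hmeas : Measurable fun t : ℝ => ENNReal.ofReal ‖deriv F (t * z)‖ :=
    ((measurable_deriv F).comp (by fun_prop)).norm.ennreal_ofReal
  have hholder := lintegral_rpow_le_lintegral_rpow_mul_lintegral_inv (μ := μ) hq
    hmeas.aemeasurable (v := fun t => ENNReal.ofReal (v (t * ‖z‖))) (by fun_prop)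
    (hμ_mem.mono fun t ht => by simpa using hvt ht) (ae_of_all _ fun t => ENNReal.ofReal_ne_top)
  rw [hinv] at hholder
  calc ENNReal.ofReal (‖F z - F 0‖ ^ q)
      = ENNReal.ofReal ‖F z - F 0‖ ^ q :=
        (ENNReal.ofReal_rpow_of_nonneg (norm_nonneg _) hq₀.le).symm
    _ ≤ (∫⁻ t, ENNReal.ofReal ‖deriv F (t * z)‖ ∂μ) ^ q := by
        rw [hμ, lintegral_smul_measure, smul_eq_mul]
        gcongr
        exact hF.ofReal_norm_sub_le_lintegral_radius hz
    _ ≤ _ := hholder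
    _ = _ := by
        rw [hμ, lintegral_smul_measure, smul_eq_mul]
        congr 2
        refine setLIntegral_congr_fun measurableSet_Ioo fun t ht => ?_
        rw [ENNReal.ofReal_rpow_of_nonneg (norm_nonneg _) hq₀.le,
          ENNReal.ofReal_rpow_of_nonneg (hvt ht).le (by linarith)]

end Radial

section RadialAveraging

/-- The Whitney disc about a point `ζ` of the unit disc: its radius is half the distance from `ζ`
to the unit circle. -/
def whitneyDisc (ζ : ℂ) : Set ℂ := ball ζ ((1 - ‖ζ‖) / 2)

variable {z ζ u : ℂ} {t q : ℝ}

lemma abs_norm_sub_norm_lt_of_mem_whitneyDisc (hu : u ∈ whitneyDisc ζ) :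
    |‖u‖ - ‖ζ‖| < (1 - ‖ζ‖) / 2 :=
  (abs_norm_sub_norm_le u ζ).trans_lt (by rwa [whitneyDisc, mem_ball, dist_eq_norm] at hu)

lemma one_sub_norm_le_of_mem_whitneyDisc (hu : u ∈ whitneyDisc ζ) :
    1 - ‖ζ‖ ≤ 2 * (1 - ‖u‖) := by
  linarith [(abs_lt.1 (abs_norm_sub_norm_lt_of_mem_whitneyDisc hu)).2]

lemma one_sub_norm_ge_of_mem_whitneyDisc (hu : u ∈ whitneyDisc ζ) :
    2 * (1 - ‖u‖) ≤ 3 * (1 - ‖ζ‖) := by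
  linarith [(abs_lt.1 (abs_norm_sub_norm_lt_of_mem_whitneyDisc hu)).1]

lemma norm_lt_one_of_mem_whitneyDisc (hζ : ‖ζ‖ < 1) (hu : u ∈ whitneyDisc ζ) : ‖u‖ < 1 := by
  linarith [one_sub_norm_le_of_mem_whitneyDisc hu]

lemma norm_one_sub_conj_mul_le_of_mem_whitneyDisc (hz : ‖z‖ < 1) (ht : t ∈ Icc (0 : ℝ) 1)
    (hu : u ∈ whitneyDisc (t * z)) : ‖1 - conj u * z‖ ≤ 5 * (1 - ‖u‖) := by
  have hle := one_sub_norm_le_of_mem_whitneyDisc hu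
  rw [norm_ofReal_mul_of_nonneg ht.1] at hle
  have htz := mul_norm_lt_one hz ht
  have hz₀ := norm_nonneg z
  have hsplit : 1 - conj u * z = ((1 - t * ‖z‖ ^ 2 : ℝ) : ℂ) - conj (u - t * z) * z := by
    have hsq : conj z * z = ((‖z‖ ^ 2 : ℝ) : ℂ) := by
      rw [← Complex.normSq_eq_norm_sq, ← Complex.normSq_eq_conj_mul_self]
    rw [map_sub, map_mul, Complex.conj_ofReal, sub_mul, mul_assoc, hsq]
    push_cast
    ring
  have hcenter : ‖((1 - t * ‖z‖ ^ 2 : ℝ) : ℂ)‖ ≤ 2 * (1 - t * ‖z‖) := by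
    rw [Complex.norm_real, Real.norm_of_nonneg (by nlinarith [ht.1, ht.2])]
    nlinarith [ht.1, ht.2]
  have hoffset : ‖conj (u - t * z) * z‖ ≤ (1 - t * ‖z‖) / 2 := by
    rw [whitneyDisc, mem_ball, dist_eq_norm, norm_ofReal_mul_of_nonneg ht.1] at hu
    rw [norm_mul, RCLike.norm_conj]
    nlinarith [norm_nonneg (u - t * z)]
  rw [hsplit]
  linarith [norm_sub_le ((1 - t * ‖z‖ ^ 2 : ℝ) : ℂ) (conj (u - t * z) * z)]

lemma HolOn.ofReal_norm_rpow_le_lintegral_whitneyDisc {H : ℂ → ℂ} (hH : HolOn H) (hq : 1 ≤ q)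
    (hζ : ‖ζ‖ < 1) :
    ENNReal.ofReal (‖H ζ‖ ^ q) ≤
      ∫⁻ u in whitneyDisc ζ, ENNReal.ofReal (3 / (1 - ‖u‖) ^ 2 * ‖H u‖ ^ q) := by
  set A := π * ((1 - ‖ζ‖) / 2) ^ 2 with hA_def
  have hA : 0 < A := by positivity
  calc ENNReal.ofReal (‖H ζ‖ ^ q)
      = ENNReal.ofReal A⁻¹ * ENNReal.ofReal (A * ‖H ζ‖ ^ q) := by
        rw [← ENNReal.ofReal_mul (by positivity), inv_mul_cancel_left₀ hA.ne']
    _ ≤ ENNReal.ofReal A⁻¹ * ∫⁻ u in whitneyDisc ζ, ENNReal.ofReal (‖H u‖ ^ q) := by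
        gcongr
        refine ofReal_area_mul_norm_rpow_le_lintegral (hH.mono fun u hu => ?_) (by positivity) hq
        exact mem_ball_zero_iff.2 (norm_lt_one_of_mem_whitneyDisc hζ hu)
    _ ≤ _ := by
        rw [← lintegral_const_mul' _ _ ENNReal.ofReal_ne_top]
        refine setLIntegral_mono' measurableSet_ball fun u hu => ?_
        have hu₁ := norm_lt_one_of_mem_whitneyDisc hζ hu
        have hu₀ : 0 < 1 - ‖u‖ := by linarith
        rw [← ENNReal.ofReal_mul (by positivity)]
        gcongr
        rw [inv_eq_one_div, div_le_div_iff₀ hA (by positivity)]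
        have hsq : (1 - ‖u‖) ^ 2 ≤ (3 / 2 * (1 - ‖ζ‖)) ^ 2 :=
          pow_le_pow_left₀ hu₀.le (by linarith [one_sub_norm_ge_of_mem_whitneyDisc hu]) 2
        nlinarith [Real.pi_gt_three, sq_nonneg (1 - ‖ζ‖), hA_def]

lemma ofReal_mul_volume_abs_mul_sub_lt_le {ρ : ℝ} (hρ : 0 ≤ ρ) (c d : ℝ) :
    ENNReal.ofReal ρ * volume {t : ℝ | |t * ρ - c| < d} ≤ ENNReal.ofReal (2 * d) := by
  rcases hρ.eq_or_lt with rfl | hρ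
  · simp
  have hball : {t : ℝ | |t * ρ - c| < d} = ball (c / ρ) (d / ρ) := by
    ext t
    have habs : |t * ρ - c| = |t - c / ρ| * ρ := by
      rw [← abs_of_pos hρ, ← abs_mul, abs_of_pos hρ, sub_mul, div_mul_cancel₀ _ hρ.ne']
    rw [mem_ofPred_eq, mem_ball, Real.dist_eq, lt_div_iff₀ hρ, habs]
  rw [hball, Real.volume_ball, ← ENNReal.ofReal_mul hρ.le]
  exact (congrArg ENNReal.ofReal (by field_simp)).le

/- A disc point `u` lies in Whitney discs about points of the radius `[0, z]` only for a set of
parameters of measure `O((1 - |u|) / |z|)`. -/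
lemma lintegral_radius_lintegral_whitneyDisc_le {G : ℂ → ℝ≥0∞} (hG : Measurable G)
    (hz : ‖z‖ < 1) :
    ENNReal.ofReal ‖z‖ * ∫⁻ t in Ioo (0 : ℝ) 1, ∫⁻ u in whitneyDisc (t * z), G u ≤
      ∫⁻ u in ball 0 1, ENNReal.ofReal (2 * (1 - ‖u‖)) * G u := by
  let S : Set (ℝ × ℂ) := {x | |x.1 * ‖z‖ - ‖x.2‖| < 1 - ‖x.2‖}
  have hS : MeasurableSet S := by apply measurableSet_lt <;> fun_prop
  have hdisc (t : ℝ) (ht : t ∈ Ioo (0 : ℝ) 1) :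
      ∫⁻ u in whitneyDisc (t * z), G u ≤ ∫⁻ u in ball 0 1, S.indicator (fun x => G x.2) (t, u) := by
    have htz := norm_ofReal_mul_lt_one hz (Ioo_subset_Icc_self ht)
    calc ∫⁻ u in whitneyDisc (t * z), G u
        = ∫⁻ u in whitneyDisc (t * z), S.indicator (fun x => G x.2) (t, u) := by
          refine setLIntegral_congr_fun measurableSet_ball fun u hu => ?_
          have hmem : (t, u) ∈ S := by
            change |t * ‖z‖ - ‖u‖| < 1 - ‖u‖
            rw [← norm_ofReal_mul_of_nonneg ht.1.le, abs_sub_comm]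
            refine (abs_norm_sub_norm_lt_of_mem_whitneyDisc hu).trans_le ?_
            linarith [one_sub_norm_le_of_mem_whitneyDisc hu]
          rw [indicator_of_mem hmem]
      _ ≤ _ := lintegral_mono_set fun u hu =>
          mem_ball_zero_iff.2 (norm_lt_one_of_mem_whitneyDisc htz hu)
  have hslice (u : ℂ) : ENNReal.ofReal ‖z‖ * ∫⁻ t in Ioo (0 : ℝ) 1,
      S.indicator (fun x => G x.2) (t, u) ≤ ENNReal.ofReal (2 * (1 - ‖u‖)) * G u := by
    have hSu : MeasurableSet {t : ℝ | |t * ‖z‖ - ‖u‖| < 1 - ‖u‖} := by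
      apply measurableSet_lt <;> fun_prop
    calc ENNReal.ofReal ‖z‖ * ∫⁻ t in Ioo (0 : ℝ) 1, S.indicator (fun x => G x.2) (t, u)
        ≤ ENNReal.ofReal ‖z‖ * ∫⁻ t, {t : ℝ | |t * ‖z‖ - ‖u‖| < 1 - ‖u‖}.indicator
            (fun _ => G u) t := by
          gcongr ENNReal.ofReal ‖z‖ * ?_
          exact setLIntegral_le_lintegral _ _
      _ = ENNReal.ofReal ‖z‖ * volume {t : ℝ | |t * ‖z‖ - ‖u‖| < 1 - ‖u‖} * G u := by
          rw [lintegral_indicator_const hSu]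
          ring
      _ ≤ _ := by
          gcongr
          exact ofReal_mul_volume_abs_mul_sub_lt_le (norm_nonneg z) _ _
  have hmeas : Measurable (S.indicator fun x => G x.2) := (hG.comp measurable_snd).indicator hS
  calc _ ≤ ENNReal.ofReal ‖z‖ * ∫⁻ t in Ioo (0 : ℝ) 1, ∫⁻ u in ball 0 1,
          S.indicator (fun x => G x.2) (t, u) := by
        gcongr ENNReal.ofReal ‖z‖ * ?_
        exact setLIntegral_mono' measurableSet_Ioo hdisc
    _ = ∫⁻ u in ball 0 1, ENNReal.ofReal ‖z‖ * ∫⁻ t in Ioo (0 : ℝ) 1,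
          S.indicator (fun x => G x.2) (t, u) := by
        rw [lintegral_const_mul' _ _ ENNReal.ofReal_ne_top, lintegral_lintegral_swap
          (f := fun t u => S.indicator (fun x => G x.2) (t, u)) hmeas.aemeasurable]
    _ ≤ _ := lintegral_mono fun u => hslice u

lemma HolOn.lintegral_radius_le {H : ℂ → ℂ} (hH : HolOn H) (hH_meas : Measurable H) (hq : 1 ≤ q)
    (hz : ‖z‖ < 1) {V : ℝ → ℝ≥0∞} {Φ : ℂ → ℝ≥0∞} (hΦ : Measurable Φ)
    (hV : ∀ t ∈ Ioo (0 : ℝ) 1, ∀ u ∈ whitneyDisc (t * z), V t ≤ Φ u) :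
    ENNReal.ofReal ‖z‖ * ∫⁻ t in Ioo (0 : ℝ) 1, ENNReal.ofReal (‖H (t * z)‖ ^ q) * V t ≤
      6 * ∫⁻ u in ball 0 1, ENNReal.ofReal (‖H u‖ ^ q / (1 - ‖u‖)) * Φ u := by
  let G (u : ℂ) : ℝ≥0∞ := ENNReal.ofReal (3 / (1 - ‖u‖) ^ 2 * ‖H u‖ ^ q) * Φ u
  have hG : Measurable G := by fun_prop
  have hdisc (t : ℝ) (ht : t ∈ Ioo (0 : ℝ) 1) :
      ENNReal.ofReal (‖H (t * z)‖ ^ q) * V t ≤ ∫⁻ u in whitneyDisc (t * z), G u := by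
    have htz := norm_ofReal_mul_lt_one hz (Ioo_subset_Icc_self ht)
    calc _ ≤ ∫⁻ u in whitneyDisc (t * z),
            ENNReal.ofReal (3 / (1 - ‖u‖) ^ 2 * ‖H u‖ ^ q) * V t := by
          rw [lintegral_mul_const _ (by fun_prop)]
          gcongr
          exact hH.ofReal_norm_rpow_le_lintegral_whitneyDisc hq htz
      _ ≤ _ := setLIntegral_mono' measurableSet_ball fun u hu => by
          dsimp only [G]
          gcongr
          exact hV t ht u hu
  calc _ ≤ ENNReal.ofReal ‖z‖ * ∫⁻ t in Ioo (0 : ℝ) 1, ∫⁻ u in whitneyDisc (t * z), G u := by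
        gcongr ENNReal.ofReal ‖z‖ * ?_
        exact setLIntegral_mono' measurableSet_Ioo hdisc
    _ ≤ ∫⁻ u in ball 0 1, ENNReal.ofReal (2 * (1 - ‖u‖)) * G u :=
        lintegral_radius_lintegral_whitneyDisc_le hG hz
    _ = ∫⁻ u in ball 0 1, 6 * (ENNReal.ofReal (‖H u‖ ^ q / (1 - ‖u‖)) * Φ u) := by
        refine setLIntegral_congr_fun measurableSet_ball fun u hu => ?_
        have hu₀ : 0 < 1 - ‖u‖ := by linarith [mem_ball_zero_iff.1 hu]
        rw [← mul_assoc, ← mul_assoc, ← ENNReal.ofReal_mul (by positivity),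
          show (6 : ℝ≥0∞) = ENNReal.ofReal 6 by simp, ← ENNReal.ofReal_mul (by positivity)]
        congr 2
        field_simp
        ring
    _ = _ := lintegral_const_mul' _ _ (by finiteness)

lemma HolOn.ofReal_norm_sub_rpow_le_lintegral {F : ℂ → ℂ} (hF : HolOn F) (hz : ‖z‖ < 1)
    (hq : 1 < q) {v P : ℝ → ℝ} (hv_meas : Measurable v) (hv : ∀ r ∈ Icc 0 ‖z‖, 0 < v r)
    (hP : ∀ r ∈ Icc 0 ‖z‖, HasDerivAt P (v r)⁻¹ r) {Φ : ℂ → ℝ} (hΦ : Measurable Φ)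
    (hvΦ : ∀ t ∈ Ioo (0 : ℝ) 1, ∀ u ∈ whitneyDisc (t * z),
      v (t * ‖z‖) ^ (q - 1) ≤ (1 - ‖u‖) * Φ u) :
    ENNReal.ofReal (‖F z - F 0‖ ^ q) ≤
      6 * (∫⁻ u in ball 0 1, ENNReal.ofReal (‖deriv F u‖ ^ q * Φ u)) *
      ENNReal.ofReal (P ‖z‖ - P 0) ^ (q - 1) := by
  refine (hF.ofReal_norm_sub_rpow_le hz hq hv_meas hv hP).trans ?_
  gcongr ?_ * _
  refine (hF.holOn_deriv.lintegral_radius_le (measurable_deriv F) hq.le hz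
    (V := fun t => ENNReal.ofReal (v (t * ‖z‖) ^ (q - 1)))
    (Φ := fun u => ENNReal.ofReal ((1 - ‖u‖) * Φ u)) (by fun_prop)
    fun t ht u hu => ENNReal.ofReal_le_ofReal (hvΦ t ht u hu)).trans_eq ?_
  congr 1
  refine setLIntegral_congr_fun measurableSet_ball fun u hu => ?_
  have hu₀ : 0 < 1 - ‖u‖ := by linarith [mem_ball_zero_iff.1 hu]
  rw [← ENNReal.ofReal_mul (by positivity), ← mul_assoc, div_mul_cancel₀ _ hu₀.ne']

end RadialAveraging

/-! ### Logarithmic growth of Besov functions -/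

section LogWeight

/-- The logarithmic weight `log (2 / (1 - r))` of the spaces `QsLog`, as a function of the
modulus. -/
noncomputable def logWeight (r : ℝ) : ℝ := Real.log (2 / (1 - r))

variable {r : ℝ}

@[fun_prop]
lemma measurable_logWeight : Measurable logWeight := by
  unfold logWeight
  fun_prop

lemma logWeight_zero : logWeight 0 = Real.log 2 := by
  rw [logWeight, sub_zero, div_one]

lemma logWeight_mono {r' : ℝ} (h : r ≤ r') (hr' : r' < 1) : logWeight r ≤ logWeight r' := by
  have hr : 0 < 1 - r := by linarith
  unfold logWeight
  gcongr

lemma log_two_le_logWeight (hr₀ : 0 ≤ r) (hr₁ : r < 1) : Real.log 2 ≤ logWeight r :=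
  logWeight_zero ▸ logWeight_mono hr₀ hr₁

lemma half_lt_logWeight (hr₀ : 0 ≤ r) (hr₁ : r < 1) : 1 / 2 < logWeight r := by
  linarith [log_two_le_logWeight hr₀ hr₁, Real.log_two_gt_d9]

lemma logWeight_pos (hr₀ : 0 ≤ r) (hr₁ : r < 1) : 0 < logWeight r := by
  linarith [half_lt_logWeight hr₀ hr₁]

lemma hasDerivAt_logWeight (hr : r < 1) : HasDerivAt logWeight (1 - r)⁻¹ r := by
  have hr₀ : 1 - r ≠ 0 := by linarith
  have hdiv : HasDerivAt (fun x : ℝ => 2 / (1 - x)) (2 / (1 - r) ^ 2) r := by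
    refine (((hasDerivAt_id r).const_sub 1).fun_inv hr₀ |>.const_mul 2).congr_deriv ?_
    simp [div_eq_mul_inv]
  refine (hdiv.log (div_ne_zero two_ne_zero hr₀)).congr_deriv ?_
  field_simp

lemma hasDerivAt_logWeight_rpow {κ : ℝ} (hκ : 1 - κ ≠ 0) (hr₀ : 0 ≤ r) (hr₁ : r < 1) :
    HasDerivAt (fun r => (1 - κ)⁻¹ * logWeight r ^ (1 - κ)) ((1 - r) * logWeight r ^ κ)⁻¹ r := by
  have hL := logWeight_pos hr₀ hr₁
  refine (((hasDerivAt_logWeight hr₁).rpow_const (Or.inl hL.ne')).const_mul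
    (1 - κ)⁻¹).congr_deriv ?_
  rw [show 1 - κ - 1 = -κ by ring, Real.rpow_neg hL.le]
  field_simp

lemma logWeight_le_two_mul_logWeight {u : ℝ} (hr : r < 1) (hu : u < 1)
    (h : (1 - u) ^ 2 ≤ 2 * (1 - r)) : logWeight r ≤ 2 * logWeight u := by
  have hr₀ : 0 < 1 - r := by linarith
  have hsq : 2 * Real.log (2 / (1 - u)) = Real.log ((2 / (1 - u)) ^ 2) := by
    rw [Real.log_pow]
    norm_num
  rw [logWeight, logWeight, hsq]
  refine Real.log_le_log (by positivity) ?_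
  rw [div_pow, div_le_div_iff₀ hr₀ (by positivity)]
  linarith

lemma exists_logWeight_rpow_le {κ ε : ℝ} (hκ : 0 < κ) (hε : 0 < ε) :
    ∃ C > 0, ∀ r, 0 ≤ r → r < 1 → logWeight r ^ κ ≤ C * (1 - r) ^ (-ε) := by
  refine ⟨2 ^ ε / (ε / κ) ^ κ, by positivity, fun r hr₀ hr₁ => ?_⟩
  have hr : 0 < 1 - r := by linarith
  calc logWeight r ^ κ ≤ ((2 / (1 - r)) ^ (ε / κ) / (ε / κ)) ^ κ :=
        Real.rpow_le_rpow (logWeight_pos hr₀ hr₁).le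
          (Real.log_le_rpow_div (by positivity) (by positivity)) hκ.le
    _ = 2 ^ ε / (ε / κ) ^ κ * (1 - r) ^ (-ε) := by
        rw [Real.div_rpow (by positivity) (by positivity), ← Real.rpow_mul (by positivity),
          div_mul_cancel₀ _ hκ.ne', Real.div_rpow (by norm_num) hr.le, Real.rpow_neg hr.le]
        ring

end LogWeight

section PointwiseEstimates

variable {a z : ℂ}

lemma one_sub_norm_left_le_norm_one_sub_conj_mul (a : ℂ) (hz : ‖z‖ < 1) :
    1 - ‖a‖ ≤ ‖1 - conj a * z‖ := by
  have hle := norm_sub_norm_le 1 (conj a * z)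
  rw [norm_one, norm_mul, RCLike.norm_conj] at hle
  nlinarith [norm_nonneg a]

lemma one_sub_norm_right_le_norm_one_sub_conj_mul (ha : ‖a‖ < 1) (z : ℂ) :
    1 - ‖z‖ ≤ ‖1 - conj a * z‖ := by
  have hle := norm_sub_norm_le 1 (conj a * z)
  rw [norm_one, norm_mul, RCLike.norm_conj] at hle
  nlinarith [norm_nonneg z]

lemma norm_one_sub_conj_mul_pos (ha : ‖a‖ < 1) (hz : ‖z‖ < 1) : 0 < ‖1 - conj a * z‖ := by
  linarith [one_sub_norm_left_le_norm_one_sub_conj_mul a hz]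

lemma norm_one_sub_conj_mul_le_two (ha : ‖a‖ < 1) (hz : ‖z‖ < 1) : ‖1 - conj a * z‖ ≤ 2 := by
  have hle := norm_sub_le 1 (conj a * z)
  rw [norm_one, norm_mul, RCLike.norm_conj] at hle
  nlinarith [norm_nonneg z]

lemma one_sub_conj_mul_ne_zero (ha : ‖a‖ < 1) (hz : ‖z‖ < 1) : 1 - conj a * z ≠ 0 :=
  norm_pos_iff.1 (norm_one_sub_conj_mul_pos ha hz)

lemma one_sub_norm_sq_pos (hz : ‖z‖ < 1) : 0 < 1 - ‖z‖ ^ 2 := by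
  nlinarith [norm_nonneg z]

lemma one_sub_norm_le_one_sub_norm_sq (hz : ‖z‖ < 1) : 1 - ‖z‖ ≤ 1 - ‖z‖ ^ 2 := by
  nlinarith [norm_nonneg z]

lemma one_sub_norm_sq_le_two_mul (z : ℂ) : 1 - ‖z‖ ^ 2 ≤ 2 * (1 - ‖z‖) := by
  nlinarith [sq_nonneg (1 - ‖z‖)]

/-- The `p`-th power of the Besov seminorm, with the conformally invariant weight `1 - |z|²` in
place of `1 - |z|` and unnormalised area measure. -/
noncomputable def besovEnergy (p : ℝ) (f : ℂ → ℂ) : ℝ≥0∞ :=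
  ∫⁻ z in ball 0 1, ENNReal.ofReal (‖deriv f z‖ ^ p * (1 - ‖z‖ ^ 2) ^ (p - 2))

lemma HolOn.ofReal_norm_sub_rpow_le_besovEnergy {p : ℝ} (hp : 2 ≤ p) {f : ℂ → ℂ} (hf : HolOn f)
    (hz : ‖z‖ < 1) :
    ENNReal.ofReal (‖f z - f 0‖ ^ p) ≤
      6 * ENNReal.ofReal (2 ^ (p - 1)) * besovEnergy p f *
        ENNReal.ofReal (logWeight ‖z‖ ^ (p - 1)) := by
  have hlog₀ : 0 < logWeight 0 := logWeight_pos le_rfl one_pos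
  have hlog : 0 < logWeight ‖z‖ := logWeight_pos (norm_nonneg z) hz
  refine (hf.ofReal_norm_sub_rpow_le_lintegral hz (by linarith : 1 < p) (v := fun r => 1 - r)
    (P := logWeight) (Φ := fun u => 2 ^ (p - 1) * (1 - ‖u‖ ^ 2) ^ (p - 2)) (by fun_prop)
    (fun r hr => by linarith [hr.2]) (fun r hr => hasDerivAt_logWeight (hr.2.trans_lt hz))
    (by fun_prop) fun t ht u hu => ?_).trans ?_
  · have htz := norm_ofReal_mul_lt_one hz (Ioo_subset_Icc_self ht)
    have hle := one_sub_norm_le_of_mem_whitneyDisc hu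
    have hu₁ := norm_lt_one_of_mem_whitneyDisc htz hu
    have hu₀ : 0 < 1 - ‖u‖ := by linarith
    rw [norm_ofReal_mul_of_nonneg ht.1.le] at hle
    calc (1 - t * ‖z‖) ^ (p - 1) ≤ (2 * (1 - ‖u‖)) ^ (p - 1) := by
          refine Real.rpow_le_rpow ?_ hle (by linarith)
          linarith [mul_norm_lt_one hz (Ioo_subset_Icc_self ht)]
      _ = (1 - ‖u‖) * (2 ^ (p - 1) * (1 - ‖u‖) ^ (p - 2)) := by
          rw [Real.mul_rpow zero_le_two hu₀.le, show p - 1 = 1 + (p - 2) by ring,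
            Real.rpow_add hu₀, Real.rpow_one]
          ring
      _ ≤ (1 - ‖u‖) * (2 ^ (p - 1) * (1 - ‖u‖ ^ 2) ^ (p - 2)) := by
          gcongr ?_ * (_ * ?_)
          exact Real.rpow_le_rpow hu₀.le (one_sub_norm_le_one_sub_norm_sq hu₁) (by linarith)
  · have henergy : ∫⁻ u in ball (0 : ℂ) 1,
        ENNReal.ofReal (‖deriv f u‖ ^ p * (2 ^ (p - 1) * (1 - ‖u‖ ^ 2) ^ (p - 2))) =
          ENNReal.ofReal (2 ^ (p - 1)) * besovEnergy p f := by
      rw [besovEnergy, ← lintegral_const_mul' _ _ ENNReal.ofReal_ne_top]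
      refine lintegral_congr fun u => ?_
      rw [← ENNReal.ofReal_mul (by positivity), mul_left_comm]
    rw [henergy, mul_assoc 6 (ENNReal.ofReal _),
      ← ENNReal.ofReal_rpow_of_nonneg hlog.le (by linarith : 0 ≤ p - 1)]
    gcongr
    · linarith
    · exact sub_le_self _ hlog₀.le

lemma exists_ofReal_norm_sub_sq_le_besovEnergy {p : ℝ} (hp : 2 ≤ p) :
    ∃ C ≠ (⊤ : ℝ≥0∞), ∀ f, HolOn f → ∀ z, ‖z‖ < 1 →
      ENNReal.ofReal (‖f z - f 0‖ ^ 2) ≤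
        C * besovEnergy p f ^ (2 / p) * ENNReal.ofReal (logWeight ‖z‖ ^ (2 - 2 / p)) := by
  have hp₀ : 0 < p := by linarith
  refine ⟨(6 * ENNReal.ofReal (2 ^ (p - 1))) ^ (2 / p), by finiteness, fun f hf z hz => ?_⟩
  have hlog := logWeight_pos (norm_nonneg z) hz
  calc ENNReal.ofReal (‖f z - f 0‖ ^ 2) = ENNReal.ofReal (‖f z - f 0‖ ^ p) ^ (2 / p) := by
        rw [ENNReal.ofReal_rpow_of_nonneg (by positivity) (by positivity),
          ← Real.rpow_mul (norm_nonneg _), mul_div_cancel₀ _ hp₀.ne', Real.rpow_two]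
    _ ≤ (6 * ENNReal.ofReal (2 ^ (p - 1)) * besovEnergy p f *
          ENNReal.ofReal (logWeight ‖z‖ ^ (p - 1))) ^ (2 / p) := by
        gcongr
        exact hf.ofReal_norm_sub_rpow_le_besovEnergy hp hz
    _ = _ := by
        rw [ENNReal.mul_rpow_of_nonneg _ _ (by positivity),
          ENNReal.mul_rpow_of_nonneg _ _ (by positivity),
          ENNReal.ofReal_rpow_of_nonneg (by positivity) (by positivity), ← Real.rpow_mul hlog.le,
          show (p - 1) * (2 / p) = 2 - 2 / p by field_simp]

lemma radialWeight_le_of_mem_whitneyDisc {κ s t : ℝ} {u : ℂ} (hκ : 0 ≤ κ) (hs : 0 ≤ s)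
    (hz : ‖z‖ < 1) (ht : t ∈ Ioo (0 : ℝ) 1) (hu : u ∈ whitneyDisc (t * z)) :
    (1 - t * ‖z‖) * logWeight (t * ‖z‖) ^ κ ≤
      (1 - ‖u‖) * (2 * 2 ^ κ * 5 ^ (2 * s) *
        (logWeight ‖u‖ ^ κ * ((1 - ‖u‖ ^ 2) / ‖1 - conj u * z‖) ^ (2 * s))) := by
  have ht' := Ioo_subset_Icc_self ht
  have hle := one_sub_norm_le_of_mem_whitneyDisc hu
  have hge := one_sub_norm_ge_of_mem_whitneyDisc hu
  have hu₁ := norm_lt_one_of_mem_whitneyDisc (norm_ofReal_mul_lt_one hz ht') hu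
  have hkernel := norm_one_sub_conj_mul_le_of_mem_whitneyDisc hz ht' hu
  rw [norm_ofReal_mul_of_nonneg ht.1.le] at hle hge
  have htz := mul_norm_lt_one hz ht'
  have htz₀ : 0 ≤ t * ‖z‖ := mul_nonneg ht.1.le (norm_nonneg z)
  have hu₂ := logWeight_pos (norm_nonneg u) hu₁
  have hlog : logWeight (t * ‖z‖) ≤ 2 * logWeight ‖u‖ := by
    refine logWeight_le_two_mul_logWeight htz hu₁ ?_
    nlinarith [norm_nonneg u]
  have hden := norm_one_sub_conj_mul_pos hu₁ hz
  have hratio : 1 ≤ 5 * ((1 - ‖u‖ ^ 2) / ‖1 - conj u * z‖) := by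
    rw [← mul_div_assoc, one_le_div hden]
    linarith [one_sub_norm_le_one_sub_norm_sq hu₁]
  calc (1 - t * ‖z‖) * logWeight (t * ‖z‖) ^ κ
      ≤ (2 * (1 - ‖u‖)) * (2 * logWeight ‖u‖) ^ κ *
          (5 * ((1 - ‖u‖ ^ 2) / ‖1 - conj u * z‖)) ^ (2 * s) := by
        refine (mul_le_mul hle ?_ ?_ (by positivity)).trans
          (le_mul_of_one_le_right (by positivity) ?_)
        · exact Real.rpow_le_rpow (logWeight_pos htz₀ htz).le hlog hκ
        · exact Real.rpow_nonneg (logWeight_pos htz₀ htz).le κ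
        · exact Real.one_le_rpow hratio (by positivity)
    _ = _ := by
        rw [Real.mul_rpow zero_le_two hu₂.le, Real.mul_rpow (by norm_num)
          (div_nonneg (one_sub_norm_sq_pos hu₁).le hden.le)]
        ring

lemma exists_ofReal_norm_sub_sq_le_lintegral_kernel {κ s : ℝ} (hκ : 1 < κ) (hs : 0 ≤ s) :
    ∃ C ≠ (⊤ : ℝ≥0∞), ∀ F, HolOn F → ∀ z, ‖z‖ < 1 →
      ENNReal.ofReal (‖F z - F 0‖ ^ 2) ≤ C * ∫⁻ u in ball 0 1, ENNReal.ofReal (‖deriv F u‖ ^ 2 *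
        (logWeight ‖u‖ ^ κ * ((1 - ‖u‖ ^ 2) / ‖1 - conj u * z‖) ^ (2 * s))) := by
  set c : ℝ := 2 * 2 ^ κ * 5 ^ (2 * s)
  have hc : 0 ≤ c := by positivity
  let P (r : ℝ) : ℝ := (1 - κ)⁻¹ * logWeight r ^ (1 - κ)
  refine ⟨6 * ENNReal.ofReal c * ENNReal.ofReal (-P 0), by finiteness, fun F hF z hz => ?_⟩
  have hlog {r : ℝ} (hr : r ∈ Icc 0 ‖z‖) : 0 < logWeight r := logWeight_pos hr.1 (hr.2.trans_lt hz)
  have hbound := hF.ofReal_norm_sub_rpow_le_lintegral hz one_lt_two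
    (v := fun r => (1 - r) * logWeight r ^ κ) (P := P)
    (Φ := fun u => c * (logWeight ‖u‖ ^ κ * ((1 - ‖u‖ ^ 2) / ‖1 - conj u * z‖) ^ (2 * s)))
    (by fun_prop)
    (fun r hr => mul_pos (by linarith [hr.2]) (Real.rpow_pos_of_pos (hlog hr) κ))
    (fun r hr => hasDerivAt_logWeight_rpow (by linarith) hr.1 (hr.2.trans_lt hz))
    (by fun_prop) (fun t ht u hu => by
      rw [show (2 : ℝ) - 1 = 1 by norm_num, Real.rpow_one]
      exact radialWeight_le_of_mem_whitneyDisc (by linarith) hs hz ht hu)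
  rw [show (2 : ℝ) - 1 = 1 by norm_num, ENNReal.rpow_one] at hbound
  simp only [Real.rpow_two] at hbound
  refine hbound.trans ?_
  have hconst : ∫⁻ u in ball (0 : ℂ) 1, ENNReal.ofReal (‖deriv F u‖ ^ 2 *
      (c * (logWeight ‖u‖ ^ κ * ((1 - ‖u‖ ^ 2) / ‖1 - conj u * z‖) ^ (2 * s)))) =
      ENNReal.ofReal c * ∫⁻ u in ball (0 : ℂ) 1, ENNReal.ofReal (‖deriv F u‖ ^ 2 *
        (logWeight ‖u‖ ^ κ * ((1 - ‖u‖ ^ 2) / ‖1 - conj u * z‖) ^ (2 * s))) := by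
    rw [← lintegral_const_mul' _ _ ENNReal.ofReal_ne_top]
    refine lintegral_congr fun u => ?_
    rw [← ENNReal.ofReal_mul hc, mul_left_comm]
  have hP : P ‖z‖ ≤ 0 := by
    refine mul_nonpos_of_nonpos_of_nonneg (inv_nonpos.2 (by linarith)) ?_
    exact Real.rpow_nonneg (hlog (right_mem_Icc.2 (norm_nonneg z))).le _
  rw [hconst, ← mul_assoc 6, mul_right_comm]
  gcongr
  linarith

end PointwiseEstimates

/-! ### Möbius maps and Forelli–Rudin integrals -/

section Mobius

variable {a z : ℂ}

lemma one_sub_norm_phi_sq (ha : ‖a‖ < 1) (hz : ‖z‖ < 1) :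
    1 - ‖phi a z‖ ^ 2 = (1 - ‖a‖ ^ 2) * (1 - ‖z‖ ^ 2) / ‖1 - conj a * z‖ ^ 2 := by
  have hden := norm_one_sub_conj_mul_pos ha hz
  rw [phi, norm_div, div_pow, eq_div_iff (by positivity), sub_mul,
    div_mul_cancel₀ _ (by positivity), one_mul]
  simp only [← Complex.normSq_eq_norm_sq, Complex.normSq_apply, Complex.sub_re, Complex.sub_im,
    Complex.mul_re, Complex.mul_im, Complex.conj_re, Complex.conj_im, Complex.one_re,
    Complex.one_im]
  ring

lemma norm_phi_lt_one (ha : ‖a‖ < 1) (hz : ‖z‖ < 1) : ‖phi a z‖ < 1 := by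
  have hden := norm_one_sub_conj_mul_pos ha hz
  have ha₀ := one_sub_norm_sq_pos ha
  have hz₀ := one_sub_norm_sq_pos hz
  have hpos : 0 < 1 - ‖phi a z‖ ^ 2 := by
    rw [one_sub_norm_phi_sq ha hz]
    positivity
  nlinarith [norm_nonneg (phi a z)]

lemma phi_zero_right (a : ℂ) : phi a 0 = a := by
  simp [phi]

lemma phi_phi (ha : ‖a‖ < 1) (hz : ‖z‖ < 1) : phi a (phi a z) = z := by
  have hcancel : (a - z) / (1 - conj a * z) * (1 - conj a * z) = a - z :=
    div_mul_cancel₀ _ (one_sub_conj_mul_ne_zero ha hz)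
  rw [phi, div_eq_iff (one_sub_conj_mul_ne_zero ha (norm_phi_lt_one ha hz)), phi]
  linear_combination -hcancel

lemma image_phi_ball (ha : ‖a‖ < 1) : phi a '' ball 0 1 = ball 0 1 := by
  refine Subset.antisymm ?_ fun z hz => ?_
  · rintro _ ⟨w, hw, rfl⟩
    exact mem_ball_zero_iff.2 (norm_phi_lt_one ha (mem_ball_zero_iff.1 hw))
  · rw [mem_ball_zero_iff] at hz
    exact ⟨phi a z, mem_ball_zero_iff.2 (norm_phi_lt_one ha hz), phi_phi ha hz⟩

lemma injOn_phi_ball (ha : ‖a‖ < 1) : InjOn (phi a) (ball 0 1) := by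
  intro z hz w hw h
  rw [← phi_phi ha (mem_ball_zero_iff.1 hz), ← phi_phi ha (mem_ball_zero_iff.1 hw), h]

lemma hasDerivAt_one_sub_conj_mul (a z : ℂ) :
    HasDerivAt (fun z => 1 - conj a * z) (-conj a) z := by
  simpa using ((hasDerivAt_id z).const_mul (conj a)).const_sub 1

lemma hasDerivAt_phi (ha : ‖a‖ < 1) (hz : ‖z‖ < 1) :
    HasDerivAt (phi a) (-(1 - conj a * a) / (1 - conj a * z) ^ 2) z := by
  refine (((hasDerivAt_id z).const_sub a).div (hasDerivAt_one_sub_conj_mul a z)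
    (one_sub_conj_mul_ne_zero ha hz)).congr_deriv ?_
  congr 1
  simp only [id_eq]
  ring

/-- The modulus of the derivative of `phi a`, which is also the square root of its Jacobian. -/
noncomputable def phiDilation (a z : ℂ) : ℝ := (1 - ‖a‖ ^ 2) / ‖1 - conj a * z‖ ^ 2

lemma phiDilation_pos (ha : ‖a‖ < 1) (hz : ‖z‖ < 1) : 0 < phiDilation a z :=
  div_pos (one_sub_norm_sq_pos ha) (pow_pos (norm_one_sub_conj_mul_pos ha hz) 2)

lemma one_sub_norm_phi_sq_eq_phiDilation_mul (ha : ‖a‖ < 1) (hz : ‖z‖ < 1) :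
    1 - ‖phi a z‖ ^ 2 = phiDilation a z * (1 - ‖z‖ ^ 2) := by
  rw [one_sub_norm_phi_sq ha hz, phiDilation, div_mul_eq_mul_div]

lemma norm_deriv_phi (ha : ‖a‖ < 1) (z : ℂ) :
    ‖-(1 - conj a * a) / (1 - conj a * z) ^ 2‖ = phiDilation a z := by
  have hreal : 1 - conj a * a = ((1 - ‖a‖ ^ 2 : ℝ) : ℂ) := by
    rw [← Complex.normSq_eq_norm_sq, ← Complex.normSq_eq_conj_mul_self]
    push_cast
    ring
  rw [norm_div, norm_neg, norm_pow, hreal, Complex.norm_real,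
    Real.norm_of_nonneg (one_sub_norm_sq_pos ha).le, phiDilation]

lemma det_restrictScalars_toSpanSingleton (c : ℂ) :
    ((ContinuousLinearMap.toSpanSingleton ℂ c).restrictScalars ℝ).det = ‖c‖ ^ 2 := by
  have hdet := LinearMap.det_restrictScalars (R := ℝ) (S := ℂ)
    (f := (ContinuousLinearMap.toSpanSingleton ℂ c : ℂ →ₗ[ℂ] ℂ))
  rw [← ContinuousLinearMap.det, ContinuousLinearMap.det_toSpanSingleton, Algebra.norm_complex_eq]
    at hdet
  exact hdet.trans (Complex.normSq_eq_norm_sq c)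

lemma lintegral_ball_eq_lintegral_comp_phi (ha : ‖a‖ < 1) (g : ℂ → ℝ≥0∞) :
    ∫⁻ z in ball 0 1, g z =
      ∫⁻ w in ball 0 1, ENNReal.ofReal (phiDilation a w ^ 2) * g (phi a w) := by
  conv_lhs => rw [← image_phi_ball ha]
  rw [lintegral_image_eq_lintegral_abs_det_fderiv_mul (f' := fun w =>
    (ContinuousLinearMap.toSpanSingleton ℂ
      (-(1 - conj a * a) / (1 - conj a * w) ^ 2)).restrictScalars ℝ) volume measurableSet_ball
    (fun w hw => ((hasDerivAt_phi ha
      (mem_ball_zero_iff.1 hw)).hasFDerivAt.restrictScalars ℝ).hasFDerivWithinAt)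
    (injOn_phi_ball ha)]
  simp only [det_restrictScalars_toSpanSingleton, norm_deriv_phi ha, abs_pow, sq_abs]

lemma HolOn.comp_phi {f : ℂ → ℂ} (hf : HolOn f) (ha : ‖a‖ < 1) :
    HolOn fun w => f (phi a w) := by
  refine DifferentiableOn.comp hf (fun w hw => ?_) fun w hw => ?_
  · exact (hasDerivAt_phi ha (mem_ball_zero_iff.1 hw)).differentiableAt.differentiableWithinAt
  · exact mem_ball_zero_iff.2 (norm_phi_lt_one ha (mem_ball_zero_iff.1 hw))

lemma HolOn.norm_deriv_comp_phi {f : ℂ → ℂ} (hf : HolOn f) (ha : ‖a‖ < 1) (hz : ‖z‖ < 1) :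
    ‖deriv (fun w => f (phi a w)) z‖ = ‖deriv f (phi a z)‖ * phiDilation a z := by
  have hderiv : HasDerivAt (fun w => f (phi a w)) _ z :=
    (hf.hasDerivAt (norm_phi_lt_one ha hz)).comp z (hasDerivAt_phi ha hz)
  rw [hderiv.deriv, norm_mul, norm_deriv_phi ha]

lemma HolOn.besovEnergy_comp_phi {f : ℂ → ℂ} (hf : HolOn f) (ha : ‖a‖ < 1) (p : ℝ) :
    besovEnergy p (fun w => f (phi a w)) = besovEnergy p f := by
  rw [besovEnergy, besovEnergy, lintegral_ball_eq_lintegral_comp_phi ha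
    fun z => ENNReal.ofReal (‖deriv f z‖ ^ p * (1 - ‖z‖ ^ 2) ^ (p - 2))]
  refine setLIntegral_congr_fun measurableSet_ball fun w hw => ?_
  rw [mem_ball_zero_iff] at hw
  have hJ := phiDilation_pos ha hw
  have hJp : phiDilation a w ^ p = phiDilation a w ^ 2 * phiDilation a w ^ (p - 2) := by
    rw [← Real.rpow_two, ← Real.rpow_add hJ, add_sub_cancel]
  rw [hf.norm_deriv_comp_phi ha hw, one_sub_norm_phi_sq_eq_phiDilation_mul ha hw,
    ← ENNReal.ofReal_mul (by positivity), Real.mul_rpow (norm_nonneg _) hJ.le,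
    Real.mul_rpow hJ.le (one_sub_norm_sq_pos hw).le, hJp]
  congr 1
  ring

end Mobius

section QsEnergy

variable {a : ℂ} {s : ℝ}

/-- The weighted Dirichlet integral `∫ |f'|² (1 - |z|²)^s`. -/
noncomputable def dirichletEnergy (s : ℝ) (f : ℂ → ℂ) : ℝ≥0∞ :=
  ∫⁻ z in ball 0 1, ENNReal.ofReal (‖deriv f z‖ ^ 2 * (1 - ‖z‖ ^ 2) ^ s)

/-- The integral `∫ |f'|² (1 - |φ_a|²)^s` whose supremum over `a` defines `Qs s`, taken with
respect to unnormalised area measure. -/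
noncomputable def qsEnergy (s : ℝ) (f : ℂ → ℂ) (a : ℂ) : ℝ≥0∞ :=
  ∫⁻ z in ball 0 1, ENNReal.ofReal (‖deriv f z‖ ^ 2 * (1 - ‖phi a z‖ ^ 2) ^ s)

lemma qsEnergy_zero (s : ℝ) (f : ℂ → ℂ) : qsEnergy s f 0 = dirichletEnergy s f := by
  simp only [qsEnergy, dirichletEnergy, phi, map_zero, zero_mul, sub_zero, div_one, zero_sub,
    norm_neg]

lemma HolOn.dirichletEnergy_comp_phi {f : ℂ → ℂ} (hf : HolOn f) (ha : ‖a‖ < 1) (s : ℝ) :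
    dirichletEnergy s (fun w => f (phi a w)) = qsEnergy s f a := by
  rw [dirichletEnergy, qsEnergy, lintegral_ball_eq_lintegral_comp_phi ha
    fun z => ENNReal.ofReal (‖deriv f z‖ ^ 2 * (1 - ‖phi a z‖ ^ 2) ^ s)]
  refine setLIntegral_congr_fun measurableSet_ball fun w hw => ?_
  rw [mem_ball_zero_iff] at hw
  rw [hf.norm_deriv_comp_phi ha hw, phi_phi ha hw, ← ENNReal.ofReal_mul (by positivity)]
  congr 1
  ring

end QsEnergy

section RadialIntegrals

lemma lintegral_ball_norm_sub {G : ℝ → ℝ≥0∞} (hG : Measurable G) (c : ℂ) (R : ℝ) :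
    ∫⁻ z in ball c R, G ‖z - c‖ =
      ENNReal.ofReal (2 * π) * ∫⁻ r in Ioo 0 R, ENNReal.ofReal r * G r := by
  have hmeas : Measurable ((ball c R).indicator fun z => G ‖z - c‖) :=
    Measurable.indicator (hG.comp (by fun_prop)) measurableSet_ball
  have hcircle (r : ℝ) (hr : r ∈ Ioi (0 : ℝ)) :
      ENNReal.ofReal r * ∫⁻ θ in Ioo (-π) π,
        (ball c R).indicator (fun z => G ‖z - c‖) (circleMap c r θ) =
      (Iio R).indicator (fun r => ENNReal.ofReal (2 * π) * (ENNReal.ofReal r * G r)) r := by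
    have hnorm (θ : ℝ) : ‖circleMap c r θ - c‖ = r := by
      rw [circleMap_sub_center, norm_circleMap_zero, abs_of_pos hr]
    by_cases hrR : r < R
    · have hmem (θ : ℝ) : circleMap c r θ ∈ ball c R := by rwa [mem_ball, dist_eq_norm, hnorm]
      simp only [indicator_of_mem (hmem _), indicator_of_mem (mem_Iio.2 hrR), hnorm,
        setLIntegral_const, Real.volume_Ioo]
      ring_nf
    · have hmem (θ : ℝ) : circleMap c r θ ∉ ball c R := by rwa [mem_ball, dist_eq_norm, hnorm]
      simp only [indicator_of_notMem (hmem _), indicator_of_notMem (show r ∉ Iio R from hrR),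
        lintegral_zero, mul_zero]
  rw [← lintegral_indicator measurableSet_ball, lintegral_eq_lintegral_circleMap hmeas c,
    setLIntegral_congr_fun measurableSet_Ioi hcircle, setLIntegral_indicator measurableSet_Iio,
    Iio_inter_Ioi, lintegral_const_mul _ (by fun_prop)]

lemma lintegral_ball_one_sub_norm_sq_rpow_ne_top {c : ℝ} (hc : -1 < c) :
    ∫⁻ z in ball (0 : ℂ) 1, ENNReal.ofReal ((1 - ‖z‖ ^ 2) ^ c) ≠ ⊤ := by
  have hpolar := lintegral_ball_norm_sub
    (G := fun r => ENNReal.ofReal ((1 - r ^ 2) ^ c)) (by fun_prop) 0 1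
  simp only [sub_zero] at hpolar
  rw [hpolar]
  refine ENNReal.mul_ne_top ENNReal.ofReal_ne_top ?_
  have hint : IntegrableOn (fun r : ℝ => 2 ^ |c| * (1 - r) ^ c) (Ioo 0 1) := by
    have hrpow := (intervalIntegral.intervalIntegrable_rpow' (a := 0) (b := 1) hc).comp_sub_left 1
    rw [sub_zero, sub_self] at hrpow
    exact (intervalIntegrable_iff_integrableOn_Ioo_of_le zero_le_one).1 (hrpow.symm.const_mul _)
  refine ne_top_of_le_ne_top hint.lintegral_lt_top.ne (setLIntegral_mono' measurableSet_Ioo ?_)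
  intro r ⟨hr₀, hr₁⟩
  have hr : 0 < 1 - r := by linarith
  rw [← ENNReal.ofReal_mul hr₀.le]
  refine ENNReal.ofReal_le_ofReal ((mul_le_of_le_one_left ?_ hr₁.le).trans ?_)
  · exact Real.rpow_nonneg (by nlinarith) c
  · rw [show 1 - r ^ 2 = (1 + r) * (1 - r) by ring, Real.mul_rpow (by linarith) hr.le]
    gcongr
    calc (1 + r) ^ c ≤ (1 + r) ^ |c| :=
          Real.rpow_le_rpow_of_exponent_le (by linarith) (le_abs_self c)
      _ ≤ 2 ^ |c| := Real.rpow_le_rpow (by linarith) (by linarith) (abs_nonneg c)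

lemma lintegral_ball_norm_sub_rpow (c : ℂ) {R δ : ℝ} (hR : 0 ≤ R) (hδ : 0 < δ) :
    ∫⁻ z in ball c R, ENNReal.ofReal (‖z - c‖ ^ (-2 + δ)) =
      ENNReal.ofReal (2 * π * (R ^ δ / δ)) := by
  have hint : IntervalIntegrable (fun r : ℝ => r ^ (-1 + δ)) volume 0 R :=
    intervalIntegral.intervalIntegrable_rpow' (by linarith)
  have hvalue : ∫ r in (0 : ℝ)..R, r ^ (-1 + δ) = R ^ δ / δ := by
    rw [integral_rpow (Or.inl (by linarith)), neg_add_cancel_comm, Real.zero_rpow hδ.ne', sub_zero]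
  rw [lintegral_ball_norm_sub (G := fun r => ENNReal.ofReal (r ^ (-2 + δ))) (by fun_prop),
    ENNReal.ofReal_mul Real.two_pi_pos.le, ← hvalue, intervalIntegral.integral_of_le hR,
    ofReal_integral_eq_lintegral_ofReal hint.1, restrict_Ioo_eq_restrict_Ioc]
  · congr 1
    refine setLIntegral_congr_fun measurableSet_Ioc fun r hr => ?_
    rw [← ENNReal.ofReal_mul hr.1.le, show -1 + δ = (-2 + δ) + 1 by ring,
      Real.rpow_add_one hr.1.ne', mul_comm]
  · filter_upwards [ae_restrict_mem measurableSet_Ioc] with r hr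
    exact Real.rpow_nonneg hr.1.le _

end RadialIntegrals

section ForelliRudin

variable {a : ℂ}

lemma exists_norm_eq_one_norm_sub_le (ha : ‖a‖ < 1) :
    ∃ e : ℂ, ‖e‖ = 1 ∧ ∀ z, ‖z‖ < 1 → ‖z - e‖ ≤ 2 * ‖1 - conj a * z‖ := by
  refine ⟨Complex.exp (a.arg * I), Complex.norm_exp_ofReal_mul_I _, fun z hz => ?_⟩
  set e := Complex.exp (a.arg * I)
  have he : ‖e‖ = 1 := Complex.norm_exp_ofReal_mul_I _
  have hae : a = ‖a‖ * e := (Complex.norm_mul_exp_arg_mul_I a).symm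
  have hee : conj e * e = 1 := by
    rw [← Complex.normSq_eq_conj_mul_self, Complex.normSq_eq_norm_sq, he]
    norm_num
  have hrotate : ‖z - e‖ = ‖1 - conj e * z‖ := by
    rw [norm_sub_rev, ← one_mul ‖e - z‖, ← he, ← RCLike.norm_conj e, ← norm_mul, mul_sub, hee]
  have hsplit : 1 - conj e * z = (1 - conj a * z) - ((1 - ‖a‖ : ℝ) : ℂ) * (conj e * z) := by
    conv_rhs => rw [hae, map_mul, Complex.conj_ofReal, ← hae]
    push_cast
    ring
  have hradial : ‖((1 - ‖a‖ : ℝ) : ℂ) * (conj e * z)‖ ≤ 1 - ‖a‖ := by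
    rw [norm_mul, norm_mul, RCLike.norm_conj, he, Complex.norm_real,
      Real.norm_of_nonneg (by linarith)]
    nlinarith [norm_nonneg z]
  rw [hrotate, hsplit]
  linarith [norm_sub_le (1 - conj a * z) (((1 - ‖a‖ : ℝ) : ℂ) * (conj e * z)),
    one_sub_norm_left_le_norm_one_sub_conj_mul a hz]

lemma lintegral_norm_one_sub_conj_mul_rpow_le (ha : ‖a‖ < 1) {δ : ℝ} (hδ₀ : 0 < δ)
    (hδ₁ : δ ≤ 1) :
    ∫⁻ z in ball 0 1, ENNReal.ofReal (‖1 - conj a * z‖ ^ (-2 + δ)) ≤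
      ENNReal.ofReal (16 * π / δ) := by
  obtain ⟨e, he, hsub⟩ := exists_norm_eq_one_norm_sub_le ha
  calc ∫⁻ z in ball 0 1, ENNReal.ofReal (‖1 - conj a * z‖ ^ (-2 + δ))
      ≤ ∫⁻ z in ball 0 1, ENNReal.ofReal 4 * ENNReal.ofReal (‖z - e‖ ^ (-2 + δ)) := by
        refine setLIntegral_mono' measurableSet_ball fun z hz => ?_
        rw [mem_ball_zero_iff] at hz
        have hze : 0 < ‖z - e‖ := by
          linarith [norm_sub_norm_le e z, norm_sub_rev e z]
        rw [← ENNReal.ofReal_mul (by norm_num)]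
        refine ENNReal.ofReal_le_ofReal ?_
        calc ‖1 - conj a * z‖ ^ (-2 + δ) ≤ (1 / 2 * ‖z - e‖) ^ (-2 + δ) :=
              Real.rpow_le_rpow_of_nonpos (by positivity) (by linarith [hsub z hz]) (by linarith)
          _ = (1 / 2) ^ (-2 + δ) * ‖z - e‖ ^ (-2 + δ) :=
              Real.mul_rpow (by norm_num) (norm_nonneg _)
          _ ≤ (1 / 2) ^ (-2 : ℝ) * ‖z - e‖ ^ (-2 + δ) := by
              gcongr ?_ * _
              exact Real.rpow_le_rpow_of_exponent_ge (by norm_num) (by norm_num) (by linarith)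
          _ = 4 * ‖z - e‖ ^ (-2 + δ) := by
              rw [Real.rpow_neg (by norm_num), Real.rpow_two]
              norm_num
    _ ≤ ENNReal.ofReal 4 * ∫⁻ z in ball e 2, ENNReal.ofReal (‖z - e‖ ^ (-2 + δ)) := by
        rw [lintegral_const_mul' _ _ ENNReal.ofReal_ne_top]
        gcongr
        exact ball_subset_ball' (by rw [dist_zero_left, he]; norm_num)
    _ ≤ ENNReal.ofReal (16 * π / δ) := by
        rw [lintegral_ball_norm_sub_rpow e zero_le_two hδ₀, ← ENNReal.ofReal_mul (by norm_num)]
        refine ENNReal.ofReal_le_ofReal ?_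
        have htwo : (2 : ℝ) ^ δ ≤ 2 := by
          simpa using Real.rpow_le_rpow_of_exponent_le one_le_two hδ₁
        calc 4 * (2 * π * (2 ^ δ / δ)) ≤ 4 * (2 * π * (2 / δ)) := by gcongr
          _ = 16 * π / δ := by ring

/- The exponent `δ = 1 / (2 L)`, with `L` the logarithmic weight of `a`, costs only a bounded
factor since `(1 - |a|)^(-δ) ≤ exp (L δ)`. -/
lemma lintegral_norm_one_sub_conj_mul_rpow_neg_two_le (ha : ‖a‖ < 1) :
    ∫⁻ z in ball 0 1, ENNReal.ofReal (‖1 - conj a * z‖ ^ (-2 : ℝ)) ≤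
      ENNReal.ofReal (96 * π * logWeight ‖a‖) := by
  have hL := half_lt_logWeight (norm_nonneg a) ha
  have ha₀ : 0 < 1 - ‖a‖ := by linarith
  set δ := 1 / (2 * logWeight ‖a‖) with hδ
  have hδ₀ : 0 < δ := by positivity
  have hδ₁ : δ ≤ 1 := by
    rw [hδ, div_le_one (by linarith)]
    linarith
  have hbounded : (1 - ‖a‖) ^ (-δ) ≤ 3 := by
    calc (1 - ‖a‖) ^ (-δ) = (1 / (1 - ‖a‖)) ^ δ := by
          rw [Real.rpow_neg ha₀.le, one_div, Real.inv_rpow ha₀.le]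
      _ ≤ (2 / (1 - ‖a‖)) ^ δ := by gcongr; norm_num
      _ = Real.exp (logWeight ‖a‖ * δ) := by
          rw [logWeight, Real.rpow_def_of_pos (by positivity)]
      _ ≤ Real.exp 1 := by
          rw [Real.exp_le_exp, hδ]
          field_simp
          norm_num
      _ ≤ 3 := Real.exp_one_lt_d9.le.trans (by norm_num)
  calc ∫⁻ z in ball 0 1, ENNReal.ofReal (‖1 - conj a * z‖ ^ (-2 : ℝ))
      ≤ ∫⁻ z in ball 0 1, ENNReal.ofReal 3 * ENNReal.ofReal (‖1 - conj a * z‖ ^ (-2 + δ)) := by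
        refine setLIntegral_mono' measurableSet_ball fun z hz => ?_
        rw [mem_ball_zero_iff] at hz
        have hle := one_sub_norm_left_le_norm_one_sub_conj_mul a hz
        rw [← ENNReal.ofReal_mul (by norm_num)]
        have hsplit : ‖1 - conj a * z‖ ^ (-2 : ℝ) =
            ‖1 - conj a * z‖ ^ (-δ) * ‖1 - conj a * z‖ ^ (-2 + δ) := by
          rw [← Real.rpow_add (ha₀.trans_le hle)]
          ring_nf
        rw [hsplit]
        gcongr ENNReal.ofReal (?_ * _)
        exact (Real.rpow_le_rpow_of_nonpos ha₀ hle (by linarith)).trans hbounded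
    _ ≤ ENNReal.ofReal 3 * ENNReal.ofReal (16 * π / δ) := by
        rw [lintegral_const_mul' _ _ ENNReal.ofReal_ne_top]
        gcongr
        exact lintegral_norm_one_sub_conj_mul_rpow_le ha hδ₀ hδ₁
    _ = ENNReal.ofReal (96 * π * logWeight ‖a‖) := by
        rw [← ENNReal.ofReal_mul (by norm_num), hδ]
        congr 1
        field_simp
        ring

end ForelliRudin

/-! ### Besov functions with weighted Dirichlet integrals -/

section BesovEmbedding

variable {p s : ℝ}

lemma exists_dirichletEnergy_le_besovEnergy (hp : 2 < p) (hs : 1 - 2 / p < s) :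
    ∃ C ≠ (⊤ : ℝ≥0∞), ∀ f, dirichletEnergy s f ≤ C * besovEnergy p f ^ (2 / p) := by
  have hp₀ : 0 < p := by linarith
  set β := 1 - 2 / p with hβ
  have hβ₀ : 0 < β := by
    rw [hβ, sub_pos, div_lt_one hp₀]
    exact hp
  set c := s / β - 2 with hc
  have hc₁ : -1 < c := by
    have : 1 < s / β := (one_lt_div hβ₀).2 hs
    linarith
  have hweight := lintegral_ball_one_sub_norm_sq_rpow_ne_top hc₁
  refine ⟨(∫⁻ z in ball (0 : ℂ) 1, ENNReal.ofReal ((1 - ‖z‖ ^ 2) ^ c)) ^ β, by finiteness,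
    fun f => ?_⟩
  have hsplit (w : ℂ) (hw : w ∈ ball 0 1) :
      ENNReal.ofReal (‖deriv f w‖ ^ 2 * (1 - ‖w‖ ^ 2) ^ s) =
        ENNReal.ofReal (‖deriv f w‖ ^ p * (1 - ‖w‖ ^ 2) ^ (p - 2)) ^ (2 / p) *
          ENNReal.ofReal ((1 - ‖w‖ ^ 2) ^ c) ^ β := by
    have hw₀ := one_sub_norm_sq_pos (mem_ball_zero_iff.1 hw)
    have hexp : s = (p - 2) * (2 / p) + c * β := by
      rw [hc, sub_mul (s / β), div_mul_cancel₀ _ hβ₀.ne', hβ]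
      field_simp
      ring
    rw [ENNReal.ofReal_rpow_of_nonneg (by positivity) (by positivity),
      ENNReal.ofReal_rpow_of_nonneg (by positivity) hβ₀.le, ← ENNReal.ofReal_mul (by positivity),
      Real.mul_rpow (by positivity) (by positivity), ← Real.rpow_mul (norm_nonneg _),
      ← Real.rpow_mul hw₀.le, ← Real.rpow_mul hw₀.le, mul_assoc, ← Real.rpow_add hw₀, ← hexp,
      mul_div_cancel₀ _ hp₀.ne', Real.rpow_two]
  rw [dirichletEnergy, setLIntegral_congr_fun measurableSet_ball hsplit, mul_comm]
  exact ENNReal.lintegral_mul_norm_pow_le (by fun_prop) (by fun_prop) (by positivity) hβ₀.le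
    (add_sub_cancel _ _)

lemma exists_logWeight_rpow_mul_div_le {κ : ℝ} (hκ : 0 < κ) (hs : 0 < s) :
    ∃ δ : ℝ, 0 < δ ∧ δ ≤ 1 ∧ ∃ C > 0, ∀ a w : ℂ, ‖a‖ < 1 → ‖w‖ < 1 →
      logWeight ‖w‖ ^ κ * ((1 - ‖w‖ ^ 2) ^ s / ‖1 - conj a * w‖ ^ 2) ≤
        C * ‖1 - conj a * w‖ ^ (-2 + δ) := by
  set δ := min (s / 2) 1
  have hδ₀ : 0 < δ := by positivity
  have hδs : δ < s := (min_le_left _ _).trans_lt (half_lt_self hs)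
  obtain ⟨K, hK, hlog⟩ := exists_logWeight_rpow_le hκ (sub_pos.2 hδs)
  refine ⟨δ, hδ₀, min_le_right _ _, K * 2 ^ s, by positivity, fun a w ha hw => ?_⟩
  have hw₀ : 0 < 1 - ‖w‖ := by linarith
  have hwsq := one_sub_norm_sq_pos hw
  have hden := norm_one_sub_conj_mul_pos ha hw
  have hexp : (1 - ‖w‖) ^ δ = (1 - ‖w‖) ^ (-(s - δ)) * (1 - ‖w‖) ^ s := by
    rw [← Real.rpow_add hw₀]
    ring_nf
  calc logWeight ‖w‖ ^ κ * ((1 - ‖w‖ ^ 2) ^ s / ‖1 - conj a * w‖ ^ 2)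
      ≤ K * (1 - ‖w‖) ^ (-(s - δ)) * ((2 * (1 - ‖w‖)) ^ s / ‖1 - conj a * w‖ ^ 2) := by
        gcongr
        · exact hlog _ (norm_nonneg w) hw
        · exact one_sub_norm_sq_le_two_mul w
    _ = K * 2 ^ s * ((1 - ‖w‖) ^ δ / ‖1 - conj a * w‖ ^ 2) := by
        rw [Real.mul_rpow zero_le_two hw₀.le, hexp]
        ring
    _ ≤ K * 2 ^ s * (‖1 - conj a * w‖ ^ δ / ‖1 - conj a * w‖ ^ 2) := by
        gcongr
        exact one_sub_norm_right_le_norm_one_sub_conj_mul ha w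
    _ = K * 2 ^ s * ‖1 - conj a * w‖ ^ (-2 + δ) := by
        rw [add_comm, Real.rpow_add hden, Real.rpow_neg hden.le, Real.rpow_two, div_eq_mul_inv]

lemma exists_lintegral_norm_sub_sq_div_le_besovEnergy (hp : 2 ≤ p) (hs : 0 < s) :
    ∃ C ≠ (⊤ : ℝ≥0∞), ∀ f, HolOn f → ∀ a : ℂ, ‖a‖ < 1 →
      ∫⁻ w in ball 0 1, ENNReal.ofReal
          (‖f w - f 0‖ ^ 2 * ((1 - ‖w‖ ^ 2) ^ s / ‖1 - conj a * w‖ ^ 2)) ≤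
        C * besovEnergy p f ^ (2 / p) := by
  obtain ⟨C, hC, hgrowth⟩ := exists_ofReal_norm_sub_sq_le_besovEnergy hp
  have hκ : 0 < 2 - 2 / p := by
    rw [sub_pos, div_lt_iff₀ (by linarith)]
    linarith
  obtain ⟨δ, hδ₀, hδ₁, K, hK, hkernel⟩ := exists_logWeight_rpow_mul_div_le hκ hs
  refine ⟨C * ENNReal.ofReal K * ENNReal.ofReal (16 * π / δ), by finiteness,
    fun f hf a ha => ?_⟩
  calc ∫⁻ w in ball 0 1, ENNReal.ofReal
          (‖f w - f 0‖ ^ 2 * ((1 - ‖w‖ ^ 2) ^ s / ‖1 - conj a * w‖ ^ 2))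
      ≤ ∫⁻ w in ball 0 1, C * besovEnergy p f ^ (2 / p) * ENNReal.ofReal K *
          ENNReal.ofReal (‖1 - conj a * w‖ ^ (-2 + δ)) := by
        refine setLIntegral_mono' measurableSet_ball fun w hw => ?_
        rw [mem_ball_zero_iff] at hw
        have hlog := logWeight_pos (norm_nonneg w) hw
        rw [ENNReal.ofReal_mul (by positivity), mul_assoc _ (ENNReal.ofReal K),
          ← ENNReal.ofReal_mul hK.le]
        grw [hgrowth f hf w hw, ← hkernel a w ha hw]
        rw [mul_assoc _ (ENNReal.ofReal (logWeight _ ^ _)), ← ENNReal.ofReal_mul (by positivity)]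
    _ = C * besovEnergy p f ^ (2 / p) * ENNReal.ofReal K *
          ∫⁻ w in ball 0 1, ENNReal.ofReal (‖1 - conj a * w‖ ^ (-2 + δ)) :=
        lintegral_const_mul _ (by fun_prop)
    _ ≤ C * besovEnergy p f ^ (2 / p) * ENNReal.ofReal K * ENNReal.ofReal (16 * π / δ) := by
        gcongr
        exact lintegral_norm_one_sub_conj_mul_rpow_le ha hδ₀ hδ₁
    _ = C * ENNReal.ofReal K * ENNReal.ofReal (16 * π / δ) * besovEnergy p f ^ (2 / p) := by ring

end BesovEmbedding

section RenormalisedOscillation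

variable {a z : ℂ} {p s : ℝ}

lemma norm_one_sub_conj_mul_phi (ha : ‖a‖ < 1) (hz : ‖z‖ < 1) :
    ‖1 - conj a * phi a z‖ = (1 - ‖a‖ ^ 2) / ‖1 - conj a * z‖ := by
  have hne := one_sub_conj_mul_ne_zero ha hz
  have hquot : 1 - conj a * phi a z = -(-(1 - conj a * a) / (1 - conj a * z) ^ 2) *
      (1 - conj a * z) := by
    rw [phi]
    field_simp
    ring
  rw [hquot, norm_mul, norm_neg, norm_deriv_phi ha, phiDilation]
  field_simp

lemma lintegral_norm_sub_sq_div_comp_phi (ha : ‖a‖ < 1) (f : ℂ → ℂ) (s : ℝ) :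
    ∫⁻ w in ball 0 1, ENNReal.ofReal
        (‖f (phi a w) - f a‖ ^ 2 * ((1 - ‖w‖ ^ 2) ^ s / ‖1 - conj a * w‖ ^ 2)) =
      ∫⁻ z in ball 0 1, ENNReal.ofReal
        (‖f z - f a‖ ^ 2 * ((1 - ‖phi a z‖ ^ 2) ^ s / ‖1 - conj a * z‖ ^ 2)) := by
  rw [lintegral_ball_eq_lintegral_comp_phi ha fun z => ENNReal.ofReal
    (‖f z - f a‖ ^ 2 * ((1 - ‖phi a z‖ ^ 2) ^ s / ‖1 - conj a * z‖ ^ 2))]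
  refine setLIntegral_congr_fun measurableSet_ball fun w hw => ?_
  rw [mem_ball_zero_iff] at hw
  have ha₀ := one_sub_norm_sq_pos ha
  have hden := norm_one_sub_conj_mul_pos ha hw
  rw [phi_phi ha hw, norm_one_sub_conj_mul_phi ha hw, ← ENNReal.ofReal_mul (by positivity),
    phiDilation]
  congr 1
  field_simp

lemma one_sub_norm_phi_sq_rpow (ha : ‖a‖ < 1) (hz : ‖z‖ < 1) (s : ℝ) :
    (1 - ‖phi a z‖ ^ 2) ^ s =
      (1 - ‖a‖ ^ 2) ^ s * (1 - ‖z‖ ^ 2) ^ s * (‖1 - conj a * z‖ ^ (-s)) ^ 2 := by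
  have ha₀ := (one_sub_norm_sq_pos ha).le
  have hz₀ := (one_sub_norm_sq_pos hz).le
  rw [one_sub_norm_phi_sq ha hz, Real.div_rpow (by positivity) (by positivity),
    Real.mul_rpow ha₀ hz₀, Real.rpow_neg (norm_nonneg _), inv_pow, ← Real.rpow_natCast_mul,
    ← Real.rpow_mul_natCast, mul_comm s, div_eq_mul_inv] <;> positivity

/-- The oscillation of `f` about its value at `a`, multiplied by `(1 - ā z) ^ (-s)`. The factor
turns the weight `(1 - |φ_a|²)^s` into the radial weight `(1 - |z|²)^s`, up to a constant. -/
noncomputable def renormOscillation (s : ℝ) (f : ℂ → ℂ) (a z : ℂ) : ℂ :=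
  (f z - f a) * (1 - conj a * z) ^ (-s : ℂ)

lemma norm_renormOscillation (s : ℝ) (f : ℂ → ℂ) (a z : ℂ) :
    ‖renormOscillation s f a z‖ = ‖f z - f a‖ * ‖1 - conj a * z‖ ^ (-s) := by
  rw [renormOscillation, norm_mul, ← Complex.ofReal_neg, Complex.norm_cpow_real]

lemma one_sub_conj_mul_mem_slitPlane (ha : ‖a‖ < 1) (hz : ‖z‖ < 1) :
    1 - conj a * z ∈ slitPlane := by
  left
  have hre := Complex.re_le_norm (conj a * z)
  rw [norm_mul, RCLike.norm_conj] at hre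
  rw [Complex.sub_re, Complex.one_re]
  nlinarith [norm_nonneg a, norm_nonneg z]

lemma HolOn.hasDerivAt_renormOscillation {f : ℂ → ℂ} (hf : HolOn f) (s : ℝ) (ha : ‖a‖ < 1)
    (hz : ‖z‖ < 1) :
    HasDerivAt (renormOscillation s f a) (deriv f z * (1 - conj a * z) ^ (-s : ℂ) +
      (f z - f a) * (-s * (1 - conj a * z) ^ (-s - 1 : ℂ) * -conj a)) z :=
  ((hf.hasDerivAt hz).sub_const (f a)).mul
    ((hasDerivAt_one_sub_conj_mul a z).cpow_const (one_sub_conj_mul_mem_slitPlane ha hz))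

lemma HolOn.holOn_renormOscillation {f : ℂ → ℂ} (hf : HolOn f) (s : ℝ) (ha : ‖a‖ < 1) :
    HolOn (renormOscillation s f a) := fun _ hz =>
  (hf.hasDerivAt_renormOscillation s ha
    (mem_ball_zero_iff.1 hz)).differentiableAt.differentiableWithinAt

lemma HolOn.norm_deriv_renormOscillation_le {f : ℂ → ℂ} (hf : HolOn f) (s : ℝ) (ha : ‖a‖ < 1)
    (hz : ‖z‖ < 1) :
    ‖deriv (renormOscillation s f a) z‖ ≤
      ‖1 - conj a * z‖ ^ (-s) * (‖deriv f z‖ + |s| * (‖f z - f a‖ / ‖1 - conj a * z‖)) := by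
  have hden := norm_one_sub_conj_mul_pos ha hz
  rw [(hf.hasDerivAt_renormOscillation s ha hz).deriv]
  refine (norm_add_le _ _).trans ?_
  rw [norm_mul, norm_mul, norm_mul, norm_mul, norm_neg, norm_neg, RCLike.norm_conj,
    show (-s - 1 : ℂ) = ((-s - 1 : ℝ) : ℂ) by push_cast; rfl, ← Complex.ofReal_neg,
    Complex.norm_cpow_real, Complex.norm_cpow_real, Complex.norm_real, Real.norm_eq_abs,
    Real.rpow_sub_one hden.ne']
  calc _ ≤ ‖deriv f z‖ * ‖1 - conj a * z‖ ^ (-s) +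
        ‖f z - f a‖ * (|s| * (‖1 - conj a * z‖ ^ (-s) / ‖1 - conj a * z‖) * 1) := by gcongr
    _ = _ := by ring

lemma HolOn.norm_deriv_renormOscillation_sq_le {f : ℂ → ℂ} (hf : HolOn f) (s : ℝ) (ha : ‖a‖ < 1)
    (hz : ‖z‖ < 1) :
    (1 - ‖a‖ ^ 2) ^ s * (‖deriv (renormOscillation s f a) z‖ ^ 2 * (1 - ‖z‖ ^ 2) ^ s) ≤
      2 * (‖deriv f z‖ ^ 2 * (1 - ‖phi a z‖ ^ 2) ^ s + s ^ 2 *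
        (‖f z - f a‖ ^ 2 * ((1 - ‖phi a z‖ ^ 2) ^ s / ‖1 - conj a * z‖ ^ 2))) := by
  have ha₀ := one_sub_norm_sq_pos ha
  have hz₀ := one_sub_norm_sq_pos hz
  rw [one_sub_norm_phi_sq_rpow ha hz]
  set d := ‖1 - conj a * z‖
  calc _ ≤ (1 - ‖a‖ ^ 2) ^ s *
          ((d ^ (-s) * (‖deriv f z‖ + |s| * (‖f z - f a‖ / d))) ^ 2 * (1 - ‖z‖ ^ 2) ^ s) := by
        gcongr
        exact hf.norm_deriv_renormOscillation_le s ha hz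
    _ = (1 - ‖a‖ ^ 2) ^ s * (1 - ‖z‖ ^ 2) ^ s * (d ^ (-s)) ^ 2 *
          (‖deriv f z‖ + |s| * (‖f z - f a‖ / d)) ^ 2 := by ring
    _ ≤ (1 - ‖a‖ ^ 2) ^ s * (1 - ‖z‖ ^ 2) ^ s * (d ^ (-s)) ^ 2 *
          (2 * (‖deriv f z‖ ^ 2 + (|s| * (‖f z - f a‖ / d)) ^ 2)) := by
        gcongr
        exact add_sq_le
    _ = _ := by
        rw [mul_pow, sq_abs]
        ring

lemma exists_dirichletEnergy_renormOscillation_le (hp : 2 < p) (hs : 1 - 2 / p < s) :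
    ∃ C ≠ (⊤ : ℝ≥0∞), ∀ f, HolOn f → ∀ a : ℂ, ‖a‖ < 1 →
      ENNReal.ofReal ((1 - ‖a‖ ^ 2) ^ s) * dirichletEnergy s (renormOscillation s f a) ≤
        C * besovEnergy p f ^ (2 / p) := by
  have hs₀ : 0 < s := by
    have : 2 / p < 1 := (div_lt_one (by linarith)).2 hp
    linarith
  obtain ⟨A, hA, hderiv⟩ := exists_dirichletEnergy_le_besovEnergy hp hs
  obtain ⟨B, hB, hosc⟩ := exists_lintegral_norm_sub_sq_div_le_besovEnergy hp.le hs₀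
  refine ⟨2 * (A + ENNReal.ofReal (s ^ 2) * B), by finiteness, fun f hf a ha => ?_⟩
  have hphi : Measurable (phi a) := by unfold phi; fun_prop
  have hosc_a := hosc _ (hf.comp_phi ha) a ha
  rw [hf.besovEnergy_comp_phi ha, phi_zero_right, lintegral_norm_sub_sq_div_comp_phi ha f] at hosc_a
  have hderiv_a := hderiv fun w => f (phi a w)
  rw [hf.dirichletEnergy_comp_phi ha, hf.besovEnergy_comp_phi ha] at hderiv_a
  calc _ ≤ ∫⁻ z in ball 0 1, 2 * (ENNReal.ofReal (‖deriv f z‖ ^ 2 * (1 - ‖phi a z‖ ^ 2) ^ s) +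
          ENNReal.ofReal (s ^ 2) * ENNReal.ofReal
            (‖f z - f a‖ ^ 2 * ((1 - ‖phi a z‖ ^ 2) ^ s / ‖1 - conj a * z‖ ^ 2))) := by
        rw [dirichletEnergy, ← lintegral_const_mul' _ _ ENNReal.ofReal_ne_top]
        refine setLIntegral_mono' measurableSet_ball fun z hz => ?_
        rw [mem_ball_zero_iff] at hz
        have ha₀ := one_sub_norm_sq_pos ha
        have hphi₀ := one_sub_norm_sq_pos (norm_phi_lt_one ha hz)
        rw [← ENNReal.ofReal_mul (by positivity), ← ENNReal.ofReal_mul (by positivity),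
          ← ENNReal.ofReal_add (by positivity) (by positivity), ← ENNReal.ofReal_ofNat 2,
          ← ENNReal.ofReal_mul (by positivity)]
        exact ENNReal.ofReal_le_ofReal (hf.norm_deriv_renormOscillation_sq_le s ha hz)
    _ = 2 * (qsEnergy s f a + ENNReal.ofReal (s ^ 2) * ∫⁻ z in ball 0 1, ENNReal.ofReal
            (‖f z - f a‖ ^ 2 * ((1 - ‖phi a z‖ ^ 2) ^ s / ‖1 - conj a * z‖ ^ 2))) := by
        rw [lintegral_const_mul' _ _ (by norm_num), lintegral_add_left (by fun_prop),
          lintegral_const_mul' _ _ ENNReal.ofReal_ne_top, qsEnergy]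
    _ ≤ 2 * (A * besovEnergy p f ^ (2 / p) +
          ENNReal.ofReal (s ^ 2) * (B * besovEnergy p f ^ (2 / p))) := by gcongr
    _ = _ := by ring

end RenormalisedOscillation

/-! ### Carleson measures -/

section FunctionSpaces

lemma setLIntegral_dA (S : Set ℂ) (f : ℂ → ℝ≥0∞) :
    ∫⁻ z in S, f z ∂dA = (ENNReal.ofReal π)⁻¹ * ∫⁻ z in S, f z := by
  rw [dA, Measure.restrict_smul, lintegral_smul_measure, smul_eq_mul]

lemma inv_ofReal_pi_mul_lt_top_iff {x : ℝ≥0∞} : (ENNReal.ofReal π)⁻¹ * x < ⊤ ↔ x ≠ ⊤ := by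
  refine ⟨fun h => (ENNReal.lt_top_of_mul_ne_top_right h.ne (by simp)).ne, fun h => ?_⟩
  have hπ : (ENNReal.ofReal π)⁻¹ ≠ ⊤ := by simp [Real.pi_pos]
  exact (ENNReal.mul_ne_top hπ h).lt_top

lemma biSup_inv_ofReal_pi_mul_lt_top_iff {J : ℂ → ℝ≥0∞} :
    ⨆ a ∈ ball (0 : ℂ) 1, (ENNReal.ofReal π)⁻¹ * J a < ⊤ ↔
      ∃ K ≠ (⊤ : ℝ≥0∞), ∀ a : ℂ, ‖a‖ < 1 → J a ≤ K := by
  simp only [← ENNReal.mul_iSup, inv_ofReal_pi_mul_lt_top_iff, ← mem_ball_zero_iff (E := ℂ)]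
  exact ⟨fun h => ⟨_, h, fun a ha => le_iSup₂ (f := fun a (_ : a ∈ ball (0 : ℂ) 1) => J a) a ha⟩,
    fun ⟨_, hK, hJ⟩ => ne_top_of_le_ne_top hK (iSup₂_le hJ)⟩

lemma mem_Besov_iff {p : ℝ} (hp : 2 ≤ p) {f : ℂ → ℂ} :
    f ∈ Besov p ↔ HolOn f ∧ besovEnergy p f ≠ ⊤ := by
  refine and_congr_right fun _ => ?_
  rw [setLIntegral_dA, inv_ofReal_pi_mul_lt_top_iff, besovEnergy]
  refine ⟨fun h => ?_, fun h => ne_top_of_le_ne_top h ?_⟩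
  · refine ne_top_of_le_ne_top (ENNReal.mul_ne_top (ENNReal.ofReal_ne_top (r := 2 ^ (p - 2))) h) ?_
    rw [← lintegral_const_mul' _ _ ENNReal.ofReal_ne_top]
    refine setLIntegral_mono' measurableSet_ball fun z hz => ?_
    rw [mem_ball_zero_iff] at hz
    have hz₀ : 0 ≤ 1 - ‖z‖ := by linarith
    rw [← ENNReal.ofReal_mul (by positivity), ← mul_assoc, ← Real.mul_rpow zero_le_two hz₀,
      mul_comm]
    gcongr ENNReal.ofReal (?_ * _)
    exact Real.rpow_le_rpow (one_sub_norm_sq_pos hz).le (one_sub_norm_sq_le_two_mul z) (by linarith)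
  · refine setLIntegral_mono' measurableSet_ball fun z hz => ?_
    rw [mem_ball_zero_iff] at hz
    rw [mul_comm]
    gcongr ENNReal.ofReal (_ * ?_)
    exact Real.rpow_le_rpow (by linarith) (one_sub_norm_le_one_sub_norm_sq hz) (by linarith)

lemma mem_Qs_iff {s : ℝ} {f : ℂ → ℂ} :
    f ∈ Qs s ↔ HolOn f ∧ ∃ K ≠ (⊤ : ℝ≥0∞), ∀ a : ℂ, ‖a‖ < 1 → qsEnergy s f a ≤ K := by
  rw [← biSup_inv_ofReal_pi_mul_lt_top_iff]
  simp only [Qs, mem_ofPred_eq, setLIntegral_dA, qsEnergy]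

lemma mem_QsLog_iff {s α : ℝ} {f : ℂ → ℂ} :
    f ∈ QsLog s α ↔ HolOn f ∧ ∃ K ≠ (⊤ : ℝ≥0∞), ∀ a : ℂ, ‖a‖ < 1 →
      ENNReal.ofReal (logWeight ‖a‖ ^ (2 * α)) * qsEnergy s f a ≤ K := by
  rw [← biSup_inv_ofReal_pi_mul_lt_top_iff]
  simp only [QsLog, mem_ofPred_eq, setLIntegral_dA, qsEnergy, logWeight,
    mul_left_comm _ (ENNReal.ofReal π)⁻¹]

end FunctionSpaces

section Volterra

variable {f g : ℂ → ℂ} {a z : ℂ}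

lemma hasDerivAt_Tg (hg : HolOn g) (hf : HolOn f) (hz : ‖z‖ < 1) :
    HasDerivAt (Tg g f) (deriv g z * f z) z := by
  have hprod : HolOn fun z => deriv g z * f z := hg.holOn_deriv.mul hf
  obtain ⟨F, hF⟩ := DifferentiableOn.isExactOn_ball hprod
  have hF' (w : ℂ) (hw : ‖w‖ < 1) := hF w (mem_ball_zero_iff.2 hw)
  refine ((hF' z hz).sub_const (F 0)).congr_of_eventuallyEq ?_
  filter_upwards [isOpen_ball.mem_nhds (mem_ball_zero_iff.2 hz)] with w hw
  exact (sub_eq_mul_integral_radius hF' hprod (mem_ball_zero_iff.1 hw)).symm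

lemma holOn_Tg (hg : HolOn g) (hf : HolOn f) : HolOn (Tg g f) := fun _ hz =>
  (hasDerivAt_Tg hg hf (mem_ball_zero_iff.1 hz)).differentiableAt.differentiableWithinAt

/-- The measure `|g'|² (1 - |φ_a|²)^s dA` on the disc, whose total mass is `qsEnergy s g a`.
Integrating `|f|²` against it gives the energy of `Tg g f`. -/
noncomputable def qsMeasure (s : ℝ) (g : ℂ → ℂ) (a : ℂ) : Measure ℂ :=
  (volume.restrict (ball 0 1)).withDensity fun z =>
    ENNReal.ofReal (‖deriv g z‖ ^ 2 * (1 - ‖phi a z‖ ^ 2) ^ s)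

instance (s : ℝ) (g : ℂ → ℂ) (a : ℂ) : SFinite (qsMeasure s g a) := by
  unfold qsMeasure
  infer_instance

lemma lintegral_qsMeasure (s : ℝ) (g : ℂ → ℂ) (a : ℂ) (h : ℂ → ℝ≥0∞) :
    ∫⁻ z, h z ∂qsMeasure s g a = ∫⁻ z in ball 0 1,
      ENNReal.ofReal (‖deriv g z‖ ^ 2 * (1 - ‖phi a z‖ ^ 2) ^ s) * h z := by
  have hphi : Measurable (phi a) := by unfold phi; fun_prop
  exact lintegral_withDensity_eq_lintegral_mul_non_measurable _ (by fun_prop)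
    (ae_of_all _ fun _ => ENNReal.ofReal_lt_top) h

lemma ae_qsMeasure_norm_lt_one (s : ℝ) (g : ℂ → ℂ) (a : ℂ) : ∀ᵐ z ∂qsMeasure s g a, ‖z‖ < 1 :=
  (withDensity_absolutelyContinuous _ _).ae_le <|
    (ae_restrict_mem measurableSet_ball).mono fun _ => mem_ball_zero_iff.1

lemma qsMeasure_univ (s : ℝ) (g : ℂ → ℂ) (a : ℂ) : qsMeasure s g a univ = qsEnergy s g a := by
  rw [qsMeasure, withDensity_apply _ MeasurableSet.univ, Measure.restrict_univ, qsEnergy]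

lemma qsEnergy_Tg (s : ℝ) (hg : HolOn g) (hf : HolOn f) (a : ℂ) :
    qsEnergy s (Tg g f) a = ∫⁻ z, ENNReal.ofReal (‖f z‖ ^ 2) ∂qsMeasure s g a := by
  rw [lintegral_qsMeasure, qsEnergy]
  refine setLIntegral_congr_fun measurableSet_ball fun z hz => ?_
  rw [(hasDerivAt_Tg hg hf (mem_ball_zero_iff.1 hz)).deriv, norm_mul, mul_pow, mul_right_comm,
    ENNReal.ofReal_mul' (by positivity)]

lemma lintegral_kernel_qsMeasure_zero (s : ℝ) (g : ℂ → ℂ) (ha : ‖a‖ < 1) :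
    ∫⁻ z, ENNReal.ofReal (((1 - ‖a‖ ^ 2) / ‖1 - conj a * z‖) ^ (2 * s)) ∂qsMeasure s g 0 =
      ENNReal.ofReal ((1 - ‖a‖ ^ 2) ^ s) * qsEnergy s g a := by
  rw [lintegral_qsMeasure, qsEnergy, ← lintegral_const_mul' _ _ ENNReal.ofReal_ne_top]
  refine setLIntegral_congr_fun measurableSet_ball fun z hz => ?_
  rw [mem_ball_zero_iff] at hz
  have ha₀ := one_sub_norm_sq_pos ha
  have hden := norm_one_sub_conj_mul_pos ha hz
  rw [← ENNReal.ofReal_mul' (by positivity), ← ENNReal.ofReal_mul (by positivity),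
    one_sub_norm_phi_sq_rpow ha hz, Real.div_rpow ha₀.le hden.le, mul_comm 2 s,
    Real.rpow_mul ha₀.le, Real.rpow_two, Real.rpow_mul hden.le, Real.rpow_two,
    Real.rpow_neg hden.le]
  congr 1
  simp only [phi, map_zero, zero_mul, sub_zero, div_one, zero_sub, norm_neg]
  ring

lemma lintegral_norm_sub_sq_qsMeasure (s : ℝ) (f g : ℂ → ℂ) (ha : ‖a‖ < 1) :
    ∫⁻ z, ENNReal.ofReal (‖f z - f a‖ ^ 2) ∂qsMeasure s g a = ENNReal.ofReal ((1 - ‖a‖ ^ 2) ^ s) *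
      ∫⁻ z, ENNReal.ofReal (‖renormOscillation s f a z‖ ^ 2) ∂qsMeasure s g 0 := by
  rw [lintegral_qsMeasure, lintegral_qsMeasure, ← lintegral_const_mul' _ _ ENNReal.ofReal_ne_top]
  refine setLIntegral_congr_fun measurableSet_ball fun z hz => ?_
  rw [mem_ball_zero_iff] at hz
  have ha₀ := one_sub_norm_sq_pos ha
  rw [← ENNReal.ofReal_mul' (by positivity), ← ENNReal.ofReal_mul' (by positivity),
    ← ENNReal.ofReal_mul (by positivity), one_sub_norm_phi_sq_rpow ha hz, norm_renormOscillation]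
  congr 1
  simp only [phi, map_zero, zero_mul, sub_zero, div_one, zero_sub, norm_neg]
  ring

end Volterra

/-! ### Sufficiency of the logarithmic condition -/

section Sufficiency

variable {p κ s : ℝ} {f g : ℂ → ℂ} {M : ℝ≥0∞}

lemma ofReal_norm_sq_le_two_mul (x c : ℂ) :
    ENNReal.ofReal (‖x‖ ^ 2) ≤ 2 * (ENNReal.ofReal (‖c‖ ^ 2) + ENNReal.ofReal (‖x - c‖ ^ 2)) := by
  rw [← ENNReal.ofReal_add (by positivity) (by positivity), ← ENNReal.ofReal_ofNat 2,
    ← ENNReal.ofReal_mul zero_le_two]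
  gcongr
  calc ‖x‖ ^ 2 ≤ (‖c‖ + ‖x - c‖) ^ 2 := by
        gcongr
        exact norm_le_norm_add_norm_sub' x c
    _ ≤ 2 * (‖c‖ ^ 2 + ‖x - c‖ ^ 2) := add_sq_le

lemma lintegral_ofReal_norm_sq_le {α : Type*} [MeasurableSpace α] (μ : Measure α) (h : α → ℂ)
    (c : ℂ) :
    ∫⁻ z, ENNReal.ofReal (‖h z‖ ^ 2) ∂μ ≤ 2 * (ENNReal.ofReal (‖c‖ ^ 2) * μ univ +
      ∫⁻ z, ENNReal.ofReal (‖h z - c‖ ^ 2) ∂μ) := by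
  rw [← lintegral_const, ← lintegral_add_left measurable_const,
    ← lintegral_const_mul' _ _ ENNReal.ofNat_ne_top]
  exact lintegral_mono fun z => ofReal_norm_sq_le_two_mul (h z) c

lemma exists_lintegral_qsMeasure_zero_le (hκ : 1 < κ) (hs : 0 ≤ s) :
    ∃ C ≠ (⊤ : ℝ≥0∞), ∀ g M,
      (∀ a : ℂ, ‖a‖ < 1 → ENNReal.ofReal (logWeight ‖a‖ ^ κ) * qsEnergy s g a ≤ M) →
      ∀ F, HolOn F → ∫⁻ z, ENNReal.ofReal (‖F z - F 0‖ ^ 2) ∂qsMeasure s g 0 ≤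
        C * M * dirichletEnergy s F := by
  obtain ⟨C, hC, hkernel⟩ := exists_ofReal_norm_sub_sq_le_lintegral_kernel hκ hs
  refine ⟨C, hC, fun g M hM F hF => ?_⟩
  let W (u z : ℂ) : ℝ≥0∞ := ENNReal.ofReal (‖deriv F u‖ ^ 2 *
    (logWeight ‖u‖ ^ κ * ((1 - ‖u‖ ^ 2) / ‖1 - conj u * z‖) ^ (2 * s)))
  have hWm : Measurable (Function.uncurry fun z u => W u z) := by fun_prop
  have hW (u : ℂ) (hu : ‖u‖ < 1) : ∫⁻ z, W u z ∂qsMeasure s g 0 ≤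
      ENNReal.ofReal (‖deriv F u‖ ^ 2 * (1 - ‖u‖ ^ 2) ^ s) * M := by
    have hlog := logWeight_pos (norm_nonneg u) hu
    calc ∫⁻ z, W u z ∂qsMeasure s g 0
        = ENNReal.ofReal (‖deriv F u‖ ^ 2 * logWeight ‖u‖ ^ κ) *
            (ENNReal.ofReal ((1 - ‖u‖ ^ 2) ^ s) * qsEnergy s g u) := by
          rw [← lintegral_kernel_qsMeasure_zero s g hu,
            ← lintegral_const_mul' _ _ ENNReal.ofReal_ne_top]
          refine lintegral_congr fun z => ?_
          rw [← ENNReal.ofReal_mul (by positivity), mul_assoc]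
      _ = ENNReal.ofReal (‖deriv F u‖ ^ 2 * (1 - ‖u‖ ^ 2) ^ s) *
            (ENNReal.ofReal (logWeight ‖u‖ ^ κ) * qsEnergy s g u) := by
          rw [ENNReal.ofReal_mul (by positivity), ENNReal.ofReal_mul (by positivity)]
          ring
      _ ≤ _ := by grw [hM u hu]
  calc ∫⁻ z, ENNReal.ofReal (‖F z - F 0‖ ^ 2) ∂qsMeasure s g 0
      ≤ ∫⁻ z, (C * ∫⁻ u in ball 0 1, W u z) ∂qsMeasure s g 0 :=
        lintegral_mono_ae ((ae_qsMeasure_norm_lt_one s g 0).mono fun z hz => hkernel F hF z hz)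
    _ = C * ∫⁻ u in ball 0 1, ∫⁻ z, W u z ∂qsMeasure s g 0 := by
        rw [lintegral_const_mul' _ _ hC, lintegral_lintegral_swap hWm.aemeasurable]
    _ ≤ C * ∫⁻ u in ball 0 1, ENNReal.ofReal (‖deriv F u‖ ^ 2 * (1 - ‖u‖ ^ 2) ^ s) * M := by
        gcongr C * ?_
        exact setLIntegral_mono' measurableSet_ball fun u hu => hW u (mem_ball_zero_iff.1 hu)
    _ = C * M * dirichletEnergy s F := by
        rw [lintegral_mul_const _ (by fun_prop), dirichletEnergy, mul_comm _ M, mul_assoc]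

lemma exists_qsEnergy_le_logWeight_rpow_mul (hκ : 0 ≤ κ) :
    ∃ C ≠ (⊤ : ℝ≥0∞), ∀ s g (a : ℂ), ‖a‖ < 1 →
      qsEnergy s g a ≤ C * (ENNReal.ofReal (logWeight ‖a‖ ^ κ) * qsEnergy s g a) := by
  have hlog : 0 < Real.log 2 ^ κ := Real.rpow_pos_of_pos (Real.log_pos one_lt_two) κ
  refine ⟨ENNReal.ofReal (Real.log 2 ^ κ)⁻¹, ENNReal.ofReal_ne_top, fun s g a ha => ?_⟩
  rw [← mul_assoc, ← ENNReal.ofReal_mul (by positivity)]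
  refine le_mul_of_one_le_left' (ENNReal.one_le_ofReal.2 ?_)
  rw [inv_mul_eq_div, one_le_div hlog]
  exact Real.rpow_le_rpow (Real.log_nonneg one_le_two)
    (log_two_le_logWeight (norm_nonneg a) ha) hκ

lemma HolOn.exists_ofReal_norm_sub_sq_mul_rpow_le (hf : HolOn f) (hp : 2 ≤ p) (hs : 0 < s)
    (hN : besovEnergy p f ≠ ⊤) : ∃ K ≠ (⊤ : ℝ≥0∞), ∀ a : ℂ, ‖a‖ < 1 →
      ENNReal.ofReal ((1 - ‖a‖ ^ 2) ^ s) * ENNReal.ofReal (‖f a - f 0‖ ^ 2) ≤ K := by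
  obtain ⟨B, hB, hgrowth⟩ := exists_ofReal_norm_sub_sq_le_besovEnergy hp
  have hκ : 0 < 2 - 2 / p := by
    have : 2 / p ≤ 1 := (div_le_one (by linarith)).2 hp
    linarith
  obtain ⟨A, hA, hlog⟩ := exists_logWeight_rpow_le hκ hs
  refine ⟨B * besovEnergy p f ^ (2 / p) * ENNReal.ofReal (2 ^ s * A), by finiteness,
    fun a ha => ?_⟩
  have ha₀ : 0 < 1 - ‖a‖ := by linarith
  have ha₁ := one_sub_norm_sq_pos ha
  have hprod : (1 - ‖a‖ ^ 2) ^ s * logWeight ‖a‖ ^ (2 - 2 / p) ≤ 2 ^ s * A :=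
    calc (1 - ‖a‖ ^ 2) ^ s * logWeight ‖a‖ ^ (2 - 2 / p)
        ≤ (2 * (1 - ‖a‖)) ^ s * (A * (1 - ‖a‖) ^ (-s)) := by
          gcongr
          · have := logWeight_pos (norm_nonneg a) ha
            positivity
          · exact one_sub_norm_sq_le_two_mul a
          · exact hlog _ (norm_nonneg a) ha
      _ = 2 ^ s * A := by
          rw [Real.mul_rpow zero_le_two ha₀.le, Real.rpow_neg ha₀.le]
          field_simp
  grw [hgrowth f hf a ha, mul_left_comm, ← ENNReal.ofReal_mul (by positivity), hprod]

lemma HolOn.exists_ofReal_norm_sq_mul_qsEnergy_le (hf : HolOn f) (hp : 2 ≤ p)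
    (hN : besovEnergy p f ≠ ⊤) (hM : M ≠ ⊤) (hg : ∀ a : ℂ, ‖a‖ < 1 →
      ENNReal.ofReal (logWeight ‖a‖ ^ (2 - 2 / p)) * qsEnergy s g a ≤ M) :
    ∃ K ≠ (⊤ : ℝ≥0∞), ∀ a : ℂ, ‖a‖ < 1 → ENNReal.ofReal (‖f a‖ ^ 2) * qsEnergy s g a ≤ K := by
  obtain ⟨B, hB, hgrowth⟩ := exists_ofReal_norm_sub_sq_le_besovEnergy hp
  have hκ : 0 ≤ 2 - 2 / p := by
    have : 2 / p ≤ 1 := (div_le_one (by linarith)).2 hp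
    linarith
  obtain ⟨D, hD, hlog⟩ := exists_qsEnergy_le_logWeight_rpow_mul hκ
  refine ⟨2 * (ENNReal.ofReal (‖f 0‖ ^ 2) * (D * M) +
    B * besovEnergy p f ^ (2 / p) * M), by finiteness, fun a ha => ?_⟩
  calc ENNReal.ofReal (‖f a‖ ^ 2) * qsEnergy s g a
      ≤ 2 * (ENNReal.ofReal (‖f 0‖ ^ 2) + B * besovEnergy p f ^ (2 / p) *
          ENNReal.ofReal (logWeight ‖a‖ ^ (2 - 2 / p))) * qsEnergy s g a := by
        grw [ofReal_norm_sq_le_two_mul (f a) (f 0), hgrowth f hf a ha]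
    _ = 2 * (ENNReal.ofReal (‖f 0‖ ^ 2) * qsEnergy s g a + B * besovEnergy p f ^ (2 / p) *
          (ENNReal.ofReal (logWeight ‖a‖ ^ (2 - 2 / p)) * qsEnergy s g a)) := by ring
    _ ≤ _ := by grw [hg a ha, hlog s g a ha, hg a ha]

lemma HolOn.exists_lintegral_norm_sub_sq_qsMeasure_le (hf : HolOn f) (hp : 2 < p)
    (hs : 1 - 2 / p < s) (hN : besovEnergy p f ≠ ⊤) (hM : M ≠ ⊤) (hg : ∀ a : ℂ, ‖a‖ < 1 →
      ENNReal.ofReal (logWeight ‖a‖ ^ (2 - 2 / p)) * qsEnergy s g a ≤ M) :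
    ∃ K ≠ (⊤ : ℝ≥0∞), ∀ a : ℂ, ‖a‖ < 1 →
      ∫⁻ z, ENNReal.ofReal (‖f z - f a‖ ^ 2) ∂qsMeasure s g a ≤ K := by
  have hp' : 2 / p < 1 := (div_lt_one (by linarith)).2 hp
  have hs₀ : 0 < s := by linarith
  obtain ⟨A, hA, hcarleson⟩ :=
    exists_lintegral_qsMeasure_zero_le (by linarith : 1 < 2 - 2 / p) hs₀.le
  obtain ⟨B, hB, hrenorm⟩ := exists_dirichletEnergy_renormOscillation_le hp hs
  obtain ⟨D, hD, hosc⟩ := hf.exists_ofReal_norm_sub_sq_mul_rpow_le hp.le hs₀ hN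
  obtain ⟨E, hE, hlog⟩ :=
    exists_qsEnergy_le_logWeight_rpow_mul (by linarith : 0 ≤ 2 - 2 / p)
  refine ⟨2 * (D * (E * M) +
    A * M * (B * besovEnergy p f ^ (2 / p))), by finiteness, fun a ha => ?_⟩
  set w := ENNReal.ofReal ((1 - ‖a‖ ^ 2) ^ s)
  have hF₀ : ‖renormOscillation s f a 0‖ = ‖f a - f 0‖ := by
    rw [norm_renormOscillation, mul_zero, sub_zero, norm_one, Real.one_rpow, mul_one, norm_sub_rev]
  calc ∫⁻ z, ENNReal.ofReal (‖f z - f a‖ ^ 2) ∂qsMeasure s g a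
      = w * ∫⁻ z, ENNReal.ofReal (‖renormOscillation s f a z‖ ^ 2) ∂qsMeasure s g 0 :=
        lintegral_norm_sub_sq_qsMeasure s f g ha
    _ ≤ w * (2 * (ENNReal.ofReal (‖f a - f 0‖ ^ 2) * qsEnergy s g 0 +
          A * M * dirichletEnergy s (renormOscillation s f a))) := by
        grw [lintegral_ofReal_norm_sq_le _ _ (renormOscillation s f a 0), qsMeasure_univ,
          hcarleson g M hg _ (hf.holOn_renormOscillation s ha), hF₀]
    _ = 2 * (w * ENNReal.ofReal (‖f a - f 0‖ ^ 2) * qsEnergy s g 0 +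
          A * M * (w * dirichletEnergy s (renormOscillation s f a))) := by ring
    _ ≤ _ := by
        grw [hosc a ha, hrenorm f hf a ha, hlog s g 0 (by simp), hg 0 (by simp)]

lemma HolOn.exists_qsEnergy_Tg_le (hf : HolOn f) (hg : HolOn g) (hp : 2 < p) (hs : 1 - 2 / p < s)
    (hN : besovEnergy p f ≠ ⊤) (hM : M ≠ ⊤) (hgM : ∀ a : ℂ, ‖a‖ < 1 →
      ENNReal.ofReal (logWeight ‖a‖ ^ (2 - 2 / p)) * qsEnergy s g a ≤ M) :
    ∃ K ≠ (⊤ : ℝ≥0∞), ∀ a : ℂ, ‖a‖ < 1 → qsEnergy s (Tg g f) a ≤ K := by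
  obtain ⟨A, hA, hmean⟩ := hf.exists_ofReal_norm_sq_mul_qsEnergy_le hp.le hN hM hgM
  obtain ⟨B, hB, hosc⟩ := hf.exists_lintegral_norm_sub_sq_qsMeasure_le hp hs hN hM hgM
  refine ⟨2 * (A + B), by finiteness, fun a ha => ?_⟩
  grw [qsEnergy_Tg s hg hf, lintegral_ofReal_norm_sq_le _ _ (f a), qsMeasure_univ, hmean a ha,
    hosc a ha]

lemma mapsInto_Tg_of_mem_QsLog (hp : 2 < p) (hs : 1 - 2 / p < s) (hg : g ∈ QsLog s (1 - 1 / p)) :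
    MapsInto (Tg g) (Besov p) (Qs s) := by
  intro f hf
  rw [mem_QsLog_iff, show 2 * (1 - 1 / p) = 2 - 2 / p by ring] at hg
  obtain ⟨hg, M, hM, hgM⟩ := hg
  obtain ⟨hf, hN⟩ := (mem_Besov_iff hp.le).1 hf
  exact mem_Qs_iff.2 ⟨holOn_Tg hg hf, hf.exists_qsEnergy_Tg_le hg hp hs hN hM hgM⟩

end Sufficiency

/-! ### Logarithmic test functions and necessity -/

section NormalFamilies

/-- A locally uniformly bounded family of holomorphic functions on the disc (a normal family in
the sense of Montel). Convex series of its members converge to holomorphic functions. -/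
structure IsNormalFamily {ι : Type*} (F : ι → ℂ → ℂ) : Prop where
  holOn (k : ι) : HolOn (F k)
  exists_bound (r : ℝ) : r < 1 → ∃ B, ∀ k, ∀ z ∈ ball (0 : ℂ) r, ‖F k z‖ ≤ B

variable {ι : Type*} {F : ι → ℂ → ℂ} {w : ι → ℝ} {z : ℂ}

namespace IsNormalFamily

lemma exists_summable_bound (hF : IsNormalFamily F) (hw₀ : ∀ k, 0 ≤ w k) (hw : Summable w)
    (hz : ‖z‖ < 1) : ∃ r < 1, z ∈ ball (0 : ℂ) r ∧ ∃ u : ι → ℝ, Summable u ∧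
      ∀ k, ∀ x ∈ ball (0 : ℂ) r, ‖w k * F k x‖ ≤ u k := by
  obtain ⟨r, hzr, hr⟩ := exists_between hz
  obtain ⟨B, hB⟩ := hF.exists_bound r hr
  refine ⟨r, hr, mem_ball_zero_iff.2 hzr, fun k => w k * B, hw.mul_right B, fun k x hx => ?_⟩
  rw [norm_mul, Complex.norm_of_nonneg (hw₀ k)]
  exact mul_le_mul_of_nonneg_left (hB k x hx) (hw₀ k)

lemma differentiableOn_mul (hF : IsNormalFamily F) (w : ι → ℝ) {r : ℝ} (hr : r < 1) (k : ι) :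
    DifferentiableOn ℂ (fun z => w k * F k z) (ball 0 r) :=
  ((hF.holOn k).mono (ball_subset_ball hr.le)).const_mul _

lemma holOn_tsum (hF : IsNormalFamily F) (hw₀ : ∀ k, 0 ≤ w k) (hw : Summable w) :
    HolOn fun z => ∑' k, w k * F k z := by
  intro z hz
  obtain ⟨r, hr, hzr, u, hu, hbound⟩ := hF.exists_summable_bound hw₀ hw (mem_ball_zero_iff.1 hz)
  exact ((differentiableOn_tsum_of_summable_norm hu (hF.differentiableOn_mul w hr) isOpen_ball
    hbound).differentiableAt (isOpen_ball.mem_nhds hzr)).differentiableWithinAt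

lemma hasSum_deriv (hF : IsNormalFamily F) (hw₀ : ∀ k, 0 ≤ w k) (hw : Summable w)
    (hz : ‖z‖ < 1) :
    HasSum (fun k => w k * deriv (F k) z) (deriv (fun z => ∑' k, w k * F k z) z) := by
  obtain ⟨r, hr, hzr, u, hu, hbound⟩ := hF.exists_summable_bound hw₀ hw hz
  refine (hasSum_deriv_of_summable_norm hu (hF.differentiableOn_mul w hr) isOpen_ball hbound
    hzr).congr_fun fun k => ?_
  exact (((hF.holOn k).hasDerivAt hz).const_mul _).deriv.symm

lemma mul_re_le_norm_tsum (hF : IsNormalFamily F) (hw₀ : ∀ k, 0 ≤ w k) (hw : Summable w)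
    (hz : ‖z‖ < 1) (hre : ∀ k, 0 ≤ (F k z).re) (k : ι) :
    w k * (F k z).re ≤ ‖∑' k, w k * F k z‖ := by
  obtain ⟨r, -, hzr, u, hu, hbound⟩ := hF.exists_summable_bound hw₀ hw hz
  have hsum : Summable fun k => w k * F k z :=
    Summable.of_norm_bounded hu fun k => hbound k z hzr
  have hsum_re := Complex.hasSum_re hsum.hasSum
  simp only [Complex.re_ofReal_mul] at hsum_re
  exact (le_hasSum hsum_re k fun j _ => mul_nonneg (hw₀ j) (hre j)).trans (Complex.re_le_norm _)

end IsNormalFamily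

lemma rpow_tsum_mul_le_tsum_mul_rpow {p : ℝ} (hp : 1 ≤ p) (w x : ι → ℝ≥0∞) (hw : ∑' k, w k ≤ 1) :
    (∑' k, w k * x k) ^ p ≤ ∑' k, w k * x k ^ p := by
  have hp₀ : 0 < p := by linarith
  rw [← ENNReal.le_rpow_inv_iff hp₀, ENNReal.tsum_eq_iSup_sum]
  refine iSup_le fun S => (ENNReal.inner_le_weight_mul_Lp_of_nonneg S hp w x).trans ?_
  have hS : (∑ k ∈ S, w k) ^ (1 - p⁻¹) ≤ 1 :=
    ENNReal.rpow_le_one ((ENNReal.sum_le_tsum S).trans hw)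
      (sub_nonneg.2 (inv_le_one_of_one_le₀ hp))
  grw [hS, one_mul, ENNReal.sum_le_tsum S]

lemma IsNormalFamily.besovEnergy_tsum_le [Countable ι] {p : ℝ} (hF : IsNormalFamily F)
    (hp : 1 ≤ p) (hw₀ : ∀ k, 0 ≤ w k) (hw : Summable w) (hw₁ : ∑' k, w k ≤ 1) :
    besovEnergy p (fun z => ∑' k, w k * F k z) ≤
      ∑' k, ENNReal.ofReal (w k) * besovEnergy p (F k) := by
  have hp₀ : 0 ≤ p := by linarith
  have hw₁' : ∑' k, ENNReal.ofReal (w k) ≤ 1 := by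
    rwa [← ENNReal.ofReal_tsum_of_nonneg hw₀ hw, ENNReal.ofReal_le_one]
  simp only [besovEnergy, ← lintegral_const_mul' _ _ ENNReal.ofReal_ne_top]
  rw [← lintegral_tsum fun k => Measurable.aemeasurable (by fun_prop)]
  refine setLIntegral_mono' measurableSet_ball fun z hz => ?_
  rw [mem_ball_zero_iff] at hz
  have hpow (x : ℂ) : ENNReal.ofReal (‖x‖ ^ p * (1 - ‖z‖ ^ 2) ^ (p - 2)) =
      ENNReal.ofReal ((1 - ‖z‖ ^ 2) ^ (p - 2)) * ‖x‖ₑ ^ p := by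
    rw [ENNReal.ofReal_mul (by positivity), mul_comm, ← ofReal_norm,
      ENNReal.ofReal_rpow_of_nonneg (norm_nonneg x) hp₀]
  simp only [hpow, mul_left_comm (ENNReal.ofReal (w _)), ENNReal.tsum_mul_left]
  gcongr
  refine le_trans ?_ (rpow_tsum_mul_le_tsum_mul_rpow hp _ _ hw₁')
  gcongr
  rw [← (hF.hasSum_deriv hw₀ hw hz).tsum_eq]
  refine enorm_tsum_le_tsum_enorm.trans_eq (tsum_congr fun k => ?_)
  rw [enorm_mul, ← ofReal_norm (w k : ℂ), Complex.norm_of_nonneg (hw₀ k)]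

end NormalFamilies

section TestFunctions

variable {p : ℝ} {a z : ℂ}

/-- The logarithmic kernel `log (2 / (1 - conj a * z))`. -/
noncomputable def logKernel (a z : ℂ) : ℂ := Real.log 2 - Complex.log (1 - conj a * z)

lemma hasDerivAt_logKernel (ha : ‖a‖ < 1) (hz : ‖z‖ < 1) :
    HasDerivAt (logKernel a) (conj a / (1 - conj a * z)) z :=
  (((hasDerivAt_one_sub_conj_mul a z).clog (one_sub_conj_mul_mem_slitPlane ha hz)).const_sub
    (Real.log 2 : ℂ)).congr_deriv (by ring)

lemma re_logKernel (ha : ‖a‖ < 1) (hz : ‖z‖ < 1) :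
    (logKernel a z).re = Real.log (2 / ‖1 - conj a * z‖) := by
  rw [logKernel, Complex.sub_re, Complex.ofReal_re, Complex.log_re,
    Real.log_div two_ne_zero (norm_one_sub_conj_mul_pos ha hz).ne']

lemma re_logKernel_nonneg (ha : ‖a‖ < 1) (hz : ‖z‖ < 1) : 0 ≤ (logKernel a z).re := by
  rw [re_logKernel ha hz]
  exact Real.log_nonneg
    ((one_le_div (norm_one_sub_conj_mul_pos ha hz)).2 (norm_one_sub_conj_mul_le_two ha hz))

lemma norm_logKernel_le {r : ℝ} (ha : ‖a‖ < 1) (hr : r < 1) (hz : z ∈ ball (0 : ℂ) r) :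
    ‖logKernel a z‖ ≤ Real.log 2 + ((1 - r)⁻¹ / 2 + 1) := by
  rw [mem_ball_zero_iff] at hz
  set u := -(conj a * z) with hu
  have hnorm : ‖u‖ ≤ ‖z‖ := by
    rw [hu, norm_neg, norm_mul, RCLike.norm_conj]
    exact mul_le_of_le_one_left (norm_nonneg z) ha.le
  have hu₁ : ‖u‖ < 1 := by linarith
  have hlog : ‖Complex.log (1 + u)‖ ≤ (1 - r)⁻¹ / 2 + 1 :=
    calc ‖Complex.log (1 + u)‖ ≤ ‖u‖ ^ 2 * (1 - ‖u‖)⁻¹ / 2 + ‖u‖ :=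
          Complex.norm_log_one_add_le hu₁
      _ ≤ 1 * (1 - r)⁻¹ / 2 + 1 := by
          gcongr
          · exact pow_le_one₀ (norm_nonneg u) hu₁.le
          · linarith
      _ = _ := by rw [one_mul]
  rw [logKernel, sub_eq_add_neg 1, ← hu]
  refine (norm_sub_le _ _).trans (add_le_add ?_ hlog)
  rw [Complex.norm_of_nonneg (Real.log_nonneg one_le_two)]

/-- The logarithmic kernel normalised to be bounded in `Besov p`, uniformly in `a`. -/
noncomputable def logTest (p : ℝ) (a z : ℂ) : ℂ :=
  (logWeight ‖a‖ ^ (-(1 / p)) : ℝ) * logKernel a z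

lemma re_logTest (p : ℝ) (a z : ℂ) :
    (logTest p a z).re = logWeight ‖a‖ ^ (-(1 / p)) * (logKernel a z).re :=
  Complex.re_ofReal_mul _ _

lemma re_logTest_nonneg (p : ℝ) (ha : ‖a‖ < 1) (hz : ‖z‖ < 1) : 0 ≤ (logTest p a z).re := by
  rw [re_logTest]
  exact mul_nonneg (Real.rpow_nonneg (logWeight_pos (norm_nonneg a) ha).le _)
    (re_logKernel_nonneg ha hz)

lemma hasDerivAt_logTest (p : ℝ) (ha : ‖a‖ < 1) (hz : ‖z‖ < 1) :
    HasDerivAt (logTest p a)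
      ((logWeight ‖a‖ ^ (-(1 / p)) : ℝ) * (conj a / (1 - conj a * z))) z :=
  (hasDerivAt_logKernel ha hz).const_mul _

lemma isNormalFamily_logTest {ι : Type*} {a : ι → ℂ} (hp : 0 < p) (ha : ∀ k, ‖a k‖ < 1) :
    IsNormalFamily fun k => logTest p (a k) where
  holOn k z hz :=
    (hasDerivAt_logTest p (ha k) (mem_ball_zero_iff.1 hz)).differentiableAt.differentiableWithinAt
  exists_bound r hr := by
    refine ⟨(1 / 2) ^ (-(1 / p)) * (Real.log 2 + ((1 - r)⁻¹ / 2 + 1)), fun k z hz => ?_⟩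
    have hlog := half_lt_logWeight (norm_nonneg (a k)) (ha k)
    rw [logTest, norm_mul, Complex.norm_of_nonneg (Real.rpow_nonneg (by linarith) _)]
    gcongr ?_ * ?_
    · exact Real.rpow_le_rpow_of_nonpos (by norm_num) hlog.le (by simpa using hp.le)
    · exact norm_logKernel_le (ha k) hr hz

lemma norm_deriv_logTest_rpow_mul_le (hp : 2 ≤ p) (ha : ‖a‖ < 1) (hz : ‖z‖ < 1) :
    ‖deriv (logTest p a) z‖ ^ p * (1 - ‖z‖ ^ 2) ^ (p - 2) ≤
      2 ^ (p - 2) * (logWeight ‖a‖)⁻¹ * ‖1 - conj a * z‖ ^ (-2 : ℝ) := by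
  have hp₀ : 0 < p := by linarith
  have hlog := logWeight_pos (norm_nonneg a) ha
  have hden := norm_one_sub_conj_mul_pos ha hz
  have hz₀ := one_sub_norm_sq_pos hz
  rw [(hasDerivAt_logTest p ha hz).deriv, norm_mul, norm_div, RCLike.norm_conj,
    Complex.norm_of_nonneg (by positivity)]
  calc (logWeight ‖a‖ ^ (-(1 / p)) * (‖a‖ / ‖1 - conj a * z‖)) ^ p * (1 - ‖z‖ ^ 2) ^ (p - 2)
      ≤ (logWeight ‖a‖ ^ (-(1 / p)) * (1 / ‖1 - conj a * z‖)) ^ p *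
          (2 * ‖1 - conj a * z‖) ^ (p - 2) := by
        gcongr
        linarith [one_sub_norm_sq_le_two_mul z, one_sub_norm_right_le_norm_one_sub_conj_mul ha z]
    _ = _ := by
        rw [Real.mul_rpow (by positivity) (by positivity), ← Real.rpow_mul hlog.le, neg_mul,
          one_div_mul_cancel hp₀.ne', Real.rpow_neg_one, Real.mul_rpow zero_le_two hden.le,
          one_div, Real.inv_rpow hden.le, ← Real.rpow_neg hden.le,
          show (-2 : ℝ) = -p + (p - 2) by ring, Real.rpow_add hden]
        ring

lemma besovEnergy_logTest_le (hp : 2 ≤ p) (ha : ‖a‖ < 1) :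
    besovEnergy p (logTest p a) ≤ ENNReal.ofReal (2 ^ (p - 2) * (96 * π)) := by
  have hlog := logWeight_pos (norm_nonneg a) ha
  calc besovEnergy p (logTest p a)
      ≤ ∫⁻ z in ball 0 1, ENNReal.ofReal (2 ^ (p - 2) * (logWeight ‖a‖)⁻¹) *
          ENNReal.ofReal (‖1 - conj a * z‖ ^ (-2 : ℝ)) := by
        refine setLIntegral_mono' measurableSet_ball fun z hz => ?_
        rw [← ENNReal.ofReal_mul (by positivity)]
        exact ENNReal.ofReal_le_ofReal
          (norm_deriv_logTest_rpow_mul_le hp ha (mem_ball_zero_iff.1 hz))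
    _ ≤ ENNReal.ofReal (2 ^ (p - 2) * (logWeight ‖a‖)⁻¹) *
          ENNReal.ofReal (96 * π * logWeight ‖a‖) := by
        rw [lintegral_const_mul' _ _ ENNReal.ofReal_ne_top]
        grw [lintegral_norm_one_sub_conj_mul_rpow_neg_two_le ha]
    _ = ENNReal.ofReal (2 ^ (p - 2) * (96 * π)) := by
        rw [← ENNReal.ofReal_mul (by positivity)]
        congr 1
        field_simp

lemma exists_mem_Besov_re_logTest_le {a : ℕ → ℂ} (hp : 2 ≤ p) (ha : ∀ k, ‖a k‖ < 1) :
    ∃ f ∈ Besov p, ∀ k, ∀ z : ℂ, ‖z‖ < 1 → (logTest p (a k) z).re ≤ 2 * 2 ^ k * ‖f z‖ := by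
  let w (k : ℕ) : ℝ := 1 / 2 / 2 ^ k
  have hw₀ (k : ℕ) : 0 ≤ w k := by positivity
  have hw : HasSum w 1 := hasSum_geometric_two' 1
  have hw' : ∑' k, ENNReal.ofReal (w k) = 1 := by
    rw [← ENNReal.ofReal_tsum_of_nonneg hw₀ hw.summable, hw.tsum_eq, ENNReal.ofReal_one]
  have hF : IsNormalFamily fun k => logTest p (a k) := isNormalFamily_logTest (by linarith) ha
  refine ⟨fun z => ∑' k, w k * logTest p (a k) z,
    (mem_Besov_iff hp).2 ⟨hF.holOn_tsum hw₀ hw.summable, ?_⟩, fun k z hz => ?_⟩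
  · refine ne_top_of_le_ne_top (ENNReal.ofReal_ne_top (r := 2 ^ (p - 2) * (96 * π))) ?_
    grw [hF.besovEnergy_tsum_le (by linarith) hw₀ hw.summable hw.tsum_eq.le]
    calc ∑' k, ENNReal.ofReal (w k) * besovEnergy p (logTest p (a k))
        ≤ ∑' k, ENNReal.ofReal (w k) * ENNReal.ofReal (2 ^ (p - 2) * (96 * π)) := by
          gcongr with k
          exact besovEnergy_logTest_le hp (ha k)
      _ = ENNReal.ofReal (2 ^ (p - 2) * (96 * π)) := by
          rw [ENNReal.tsum_mul_right, hw', one_mul]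
  · have hle := hF.mul_re_le_norm_tsum hw₀ hw.summable hz
      (fun j => re_logTest_nonneg p (ha j) hz) k
    calc (logTest p (a k) z).re = 2 * 2 ^ k * (w k * (logTest p (a k) z).re) := by
          simp only [w]
          field_simp
      _ ≤ _ := by gcongr

end TestFunctions

section Necessity

variable {p s : ℝ} {g : ℂ → ℂ} {a z : ℂ}

lemma logWeight_rpow_le_of_le_re_logKernel (ha : ‖a‖ < 1)
    (hnear : logWeight ‖a‖ / 4 ≤ (logKernel a z).re) :
    logWeight ‖a‖ ^ (2 - 2 / p) ≤ 16 * (logTest p a z).re ^ 2 := by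
  have hlog := logWeight_pos (norm_nonneg a) ha
  have hexp : (logWeight ‖a‖ ^ (-(1 / p))) ^ 2 = logWeight ‖a‖ ^ (-(2 / p)) := by
    rw [← Real.rpow_mul_natCast hlog.le]
    congr 1
    push_cast
    ring
  calc logWeight ‖a‖ ^ (2 - 2 / p)
      = 16 * (logWeight ‖a‖ ^ (-(1 / p)) * (logWeight ‖a‖ / 4)) ^ 2 := by
        rw [mul_pow, hexp, sub_eq_add_neg, Real.rpow_add hlog, Real.rpow_two]
        ring
    _ ≤ 16 * (logTest p a z).re ^ 2 := by
        rw [re_logTest]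
        gcongr

lemma one_sub_norm_sq_div_sq_le_of_re_logKernel_le (ha : ‖a‖ < 1) (hz : ‖z‖ < 1)
    (hfar : (logKernel a z).re ≤ logWeight ‖a‖ / 4) :
    (1 - ‖a‖ ^ 2) / ‖1 - conj a * z‖ ^ 2 ≤ (1 - ‖a‖) ^ (1 / 2 : ℝ) := by
  have hden := norm_one_sub_conj_mul_pos ha hz
  have ha₀ : 0 < 1 - ‖a‖ := by linarith
  have hx : 0 < 2 / (1 - ‖a‖) := by positivity
  have hle : 2 / ‖1 - conj a * z‖ ≤ (2 / (1 - ‖a‖)) ^ (1 / 4 : ℝ) := by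
    rw [← Real.log_le_log_iff (by positivity) (by positivity), Real.log_rpow hx,
      ← re_logKernel ha hz]
    exact hfar.trans_eq (by rw [logWeight]; ring)
  calc (1 - ‖a‖ ^ 2) / ‖1 - conj a * z‖ ^ 2
      ≤ 2 * (1 - ‖a‖) / ‖1 - conj a * z‖ ^ 2 := by
        gcongr
        exact one_sub_norm_sq_le_two_mul a
    _ = (1 - ‖a‖) / 2 * (2 / ‖1 - conj a * z‖) ^ 2 := by field_simp
    _ ≤ (1 - ‖a‖) / 2 * ((2 / (1 - ‖a‖)) ^ (1 / 4 : ℝ)) ^ 2 := by gcongr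
    _ = ((1 - ‖a‖) / 2) ^ (1 / 2 : ℝ) := by
        rw [← Real.rpow_mul_natCast hx.le, ← inv_div, Real.inv_rpow hx.le, ← Real.rpow_neg hx.le,
          inv_mul_eq_iff_eq_mul₀ hx.ne', ← Real.rpow_one_add' hx.le (by norm_num)]
        norm_num
    _ ≤ (1 - ‖a‖) ^ (1 / 2 : ℝ) := by
        gcongr
        linarith

lemma exists_logWeight_rpow_mul_le_of_re_logKernel_le (hp : 1 < p) (hs : 0 < s) :
    ∃ C > (0 : ℝ), ∀ a z : ℂ, ‖a‖ < 1 → ‖z‖ < 1 → (logKernel a z).re ≤ logWeight ‖a‖ / 4 →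
      logWeight ‖a‖ ^ (2 - 2 / p) * (1 - ‖phi a z‖ ^ 2) ^ s ≤ C * (1 - ‖z‖ ^ 2) ^ s := by
  have hκ : 0 < 2 - 2 / p := by
    have : 2 / p < 2 := div_lt_self two_pos hp
    linarith
  obtain ⟨C, hC, hlog⟩ := exists_logWeight_rpow_le hκ (half_pos hs)
  refine ⟨C, hC, fun a z ha hz hfar => ?_⟩
  have ha₀ : 0 < 1 - ‖a‖ := by linarith
  have hz₀ := one_sub_norm_sq_pos hz
  have hphi : (1 - ‖phi a z‖ ^ 2) ^ s ≤ (1 - ‖a‖) ^ (s / 2) * (1 - ‖z‖ ^ 2) ^ s :=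
    calc (1 - ‖phi a z‖ ^ 2) ^ s
        = ((1 - ‖a‖ ^ 2) / ‖1 - conj a * z‖ ^ 2 * (1 - ‖z‖ ^ 2)) ^ s := by
          rw [one_sub_norm_phi_sq ha hz, div_mul_eq_mul_div]
      _ ≤ ((1 - ‖a‖) ^ (1 / 2 : ℝ) * (1 - ‖z‖ ^ 2)) ^ s := by
          have := one_sub_norm_sq_pos ha
          gcongr
          exact one_sub_norm_sq_div_sq_le_of_re_logKernel_le ha hz hfar
      _ = (1 - ‖a‖) ^ (s / 2) * (1 - ‖z‖ ^ 2) ^ s := by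
          rw [Real.mul_rpow (by positivity) hz₀.le, ← Real.rpow_mul ha₀.le, one_div_mul_eq_div]
  calc logWeight ‖a‖ ^ (2 - 2 / p) * (1 - ‖phi a z‖ ^ 2) ^ s
      ≤ C * (1 - ‖a‖) ^ (-(s / 2)) * ((1 - ‖a‖) ^ (s / 2) * (1 - ‖z‖ ^ 2) ^ s) := by
        gcongr
        · exact Real.rpow_nonneg (one_sub_norm_sq_pos (norm_phi_lt_one ha hz)).le s
        · exact hlog _ (norm_nonneg a) ha
    _ = C * (1 - ‖z‖ ^ 2) ^ s := by
        rw [Real.rpow_neg ha₀.le]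
        field_simp

/- Where `(logKernel a z).re` falls below a quarter of its maximal size `logWeight ‖a‖`, the point
`z` is far from `a` and the factor `1 - |φ_a|²` alone beats the logarithm. -/
lemma exists_logWeight_rpow_mul_le_re_logTest (hp : 1 < p) (hs : 0 < s) :
    ∃ C > (0 : ℝ), ∀ a z : ℂ, ‖a‖ < 1 → ‖z‖ < 1 →
      logWeight ‖a‖ ^ (2 - 2 / p) * (1 - ‖phi a z‖ ^ 2) ^ s ≤
        16 * (logTest p a z).re ^ 2 * (1 - ‖phi a z‖ ^ 2) ^ s + C * (1 - ‖z‖ ^ 2) ^ s := by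
  obtain ⟨C, hC, hfar⟩ := exists_logWeight_rpow_mul_le_of_re_logKernel_le hp hs
  refine ⟨C, hC, fun a z ha hz => ?_⟩
  have hphi := one_sub_norm_sq_pos (norm_phi_lt_one ha hz)
  have hz₀ := one_sub_norm_sq_pos hz
  rcases le_total (logWeight ‖a‖ / 4) (logKernel a z).re with h | h
  · refine le_add_of_le_of_nonneg ?_ (by positivity)
    gcongr
    exact logWeight_rpow_le_of_le_re_logKernel ha h
  · exact le_add_of_nonneg_of_le (by positivity) (hfar a z ha hz h)

lemma exists_logWeight_rpow_mul_qsEnergy_le (hp : 1 < p) (hs : 0 < s) :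
    ∃ C ≠ (⊤ : ℝ≥0∞), ∀ f g, HolOn f → HolOn g → ∀ a : ℂ, ‖a‖ < 1 → ∀ m : ℝ,
      (∀ z : ℂ, ‖z‖ < 1 → (logTest p a z).re ≤ m * ‖f z‖) →
      ENNReal.ofReal (logWeight ‖a‖ ^ (2 - 2 / p)) * qsEnergy s g a ≤
        ENNReal.ofReal (16 * m ^ 2) * qsEnergy s (Tg g f) a + C * qsEnergy s g 0 := by
  obtain ⟨C, hC, hsplit⟩ := exists_logWeight_rpow_mul_le_re_logTest hp hs
  refine ⟨ENNReal.ofReal C, ENNReal.ofReal_ne_top, fun f g hf hg a ha m hm => ?_⟩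
  have hlog := logWeight_pos (norm_nonneg a) ha
  rw [qsEnergy_zero, qsEnergy, qsEnergy, dirichletEnergy,
    ← lintegral_const_mul' _ _ ENNReal.ofReal_ne_top,
    ← lintegral_const_mul' _ _ ENNReal.ofReal_ne_top,
    ← lintegral_const_mul' _ _ ENNReal.ofReal_ne_top, ← lintegral_add_right _ (by fun_prop)]
  refine setLIntegral_mono' measurableSet_ball fun z hz => ?_
  rw [mem_ball_zero_iff] at hz
  have hphi := one_sub_norm_sq_pos (norm_phi_lt_one ha hz)
  have hz₀ := one_sub_norm_sq_pos hz
  rw [(hasDerivAt_Tg hg hf hz).deriv, norm_mul, ← ENNReal.ofReal_mul (by positivity),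
    ← ENNReal.ofReal_mul (by positivity), ← ENNReal.ofReal_mul (by positivity),
    ← ENNReal.ofReal_add (by positivity) (by positivity)]
  gcongr
  calc logWeight ‖a‖ ^ (2 - 2 / p) * (‖deriv g z‖ ^ 2 * (1 - ‖phi a z‖ ^ 2) ^ s)
      = ‖deriv g z‖ ^ 2 * (logWeight ‖a‖ ^ (2 - 2 / p) * (1 - ‖phi a z‖ ^ 2) ^ s) := by ring
    _ ≤ ‖deriv g z‖ ^ 2 * (16 * (m * ‖f z‖) ^ 2 * (1 - ‖phi a z‖ ^ 2) ^ s +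
          C * (1 - ‖z‖ ^ 2) ^ s) := by
        grw [hsplit a z ha hz]
        gcongr
        · exact re_logTest_nonneg p ha hz
        · exact hm z hz
    _ = _ := by ring

lemma const_mem_Besov (hp : 2 ≤ p) (c : ℂ) : (fun _ => c) ∈ Besov p := by
  refine (mem_Besov_iff hp).2 ⟨differentiableOn_const c, ?_⟩
  simp [besovEnergy, Real.zero_rpow (by linarith : p ≠ 0)]

lemma qsEnergy_zero_ne_top_of_mapsInto (hp : 2 ≤ p) (hg : HolOn g)
    (hmap : MapsInto (Tg g) (Besov p) (Qs s)) : qsEnergy s g 0 ≠ ⊤ := by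
  obtain ⟨-, K, hK, hle⟩ := mem_Qs_iff.1 (hmap _ (const_mem_Besov hp 1))
  refine ne_top_of_le_ne_top hK ((Eq.le ?_).trans (hle 0 (by simp)))
  rw [qsEnergy_Tg s hg (differentiableOn_const 1)]
  simp [qsMeasure_univ]

/- Gliding hump: if the supremum were infinite, points `a k` where the quantity exceeds `8 ^ k`
would give a single function `∑ 2⁻ᵏ logTest p (a k)` whose image under `Tg g` is in `Qs s`, which
only allows growth of order `4 ^ k`. -/
lemma mem_QsLog_of_mapsInto_Tg (hp : 2 ≤ p) (hs : 0 < s) (hg : HolOn g)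
    (hmap : MapsInto (Tg g) (Besov p) (Qs s)) : g ∈ QsLog s (1 - 1 / p) := by
  rw [mem_QsLog_iff, show 2 * (1 - 1 / p) = 2 - 2 / p by ring]
  refine ⟨hg, ?_⟩
  by_contra! hunbdd
  choose a ha hbig using fun k : ℕ => hunbdd (8 ^ k) (by finiteness)
  obtain ⟨C, hC, htest⟩ := exists_logWeight_rpow_mul_qsEnergy_le (by linarith : 1 < p) hs
  obtain ⟨f, hf, hlow⟩ := exists_mem_Besov_re_logTest_le hp ha
  obtain ⟨-, K, hK, hTg⟩ := mem_Qs_iff.1 (hmap f hf)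
  have hg₀ := qsEnergy_zero_ne_top_of_mapsInto hp hg hmap
  obtain ⟨n, hn⟩ := ENNReal.exists_nat_gt
    (by finiteness : 64 * K + C * qsEnergy s g 0 ≠ ⊤)
  refine (hbig n).not_ge ?_
  calc ENNReal.ofReal (logWeight ‖a n‖ ^ (2 - 2 / p)) * qsEnergy s g (a n)
      ≤ ENNReal.ofReal (16 * (2 * 2 ^ n) ^ 2) * K + C * qsEnergy s g 0 := by
        grw [htest f g hf.1 hg (a n) (ha n) _ (hlow n), hTg (a n) (ha n)]
    _ = 4 ^ n * (64 * K) + C * qsEnergy s g 0 := by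
        rw [show (16 : ℝ) * (2 * 2 ^ n) ^ 2 = 64 * 4 ^ n by
          rw [mul_pow, ← pow_mul, mul_comm n, pow_mul]; ring]
        rw [ENNReal.ofReal_mul (by norm_num), ENNReal.ofReal_pow (by norm_num)]
        simp only [ENNReal.ofReal_ofNat]
        ring
    _ ≤ 4 ^ n * (64 * K + C * qsEnergy s g 0) := by
        rw [mul_add]
        gcongr _ + ?_
        exact le_mul_of_one_le_left zero_le (one_le_pow₀ (by norm_num : (1 : ℝ≥0∞) ≤ 4))
    _ ≤ 4 ^ n * 2 ^ n := by
        gcongr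
        exact hn.le.trans (mod_cast n.lt_two_pow_self.le)
    _ = 8 ^ n := by rw [← mul_pow]; norm_num

end Necessity

theorem stmt8_general (p p' s : ℝ) (hp : 2 < p) (hpp' : 1 / p + 1 / p' = 1)
    (hps : 1 - 2 / p < s) (g : ℂ → ℂ) (hg : HolOn g) :
    MapsInto (Tg g) (Besov p) (Qs s) ↔ g ∈ QsLog s (1 / p') := by
  have hs : 0 < s := by
    have : 2 / p < 1 := (div_lt_one (by linarith)).2 hp
    linarith
  rw [show 1 / p' = 1 - 1 / p by linarith]
  exact ⟨mem_QsLog_of_mapsInto_Tg hp.le hs hg, mapsInto_Tg_of_mem_QsLog hp hps⟩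

/-- For `2 < p < ∞`, `0 < s < 1` with `1 - 2/p < s`, `p'` the conjugate
exponent of `p`, and `g` holomorphic on the unit disc: `T_g` maps `Bᵖ` into `Q_s` iff
`g ∈ Q_{s,log,1/p'}`. -/
theorem stmt8 (p p' s : ℝ) (hp : 2 < p) (hpp' : 1 / p + 1 / p' = 1)
    (hs0 : 0 < s) (hs1 : s < 1) (hps : 1 - 2 / p < s) (g : ℂ → ℂ) (hg : HolOn g) :
    MapsInto (Tg g) (Besov p) (Qs s) ↔ g ∈ QsLog s (1 / p') :=
  stmt8_general p p' s hp hpp' hps g hg
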